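/- arXiv:1904.04644 — 7 statements merged into one kernel-verified Lean document; each statement's English description precedes it below -/
import Mathlib

section
/- Let (Ω, F, μ) be a probability space and fix real exponents 1 ≤ p < q. Let g : Ω → [0, ∞) be measurable with ∫ g^q dμ ≤ C < ∞, let c₀ > 0, and let ξ : Ω → ℝ be measurable such that |ξ(ω)| ≤ c₀ · g(ω)^p for every ω with |ξ(ω)| ≥ c₀. Then for every c ≥ c₀: ∫ |ξ − ξ^c| dμ ≤ ∫_{{|ξ| ≥ c}} |ξ| dμ ≤ c₀^{q/p} · C / c^{q/p − 1}. -/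
open MeasureTheory Filter Topology

/-- The truncation `ξ^c := (c ∧ ξ) ∨ (−c)`. -/
def trunc {Ω : Type*} (ξ : Ω → ℝ) (c : ℝ) : Ω → ℝ :=
  fun ω => max (min (ξ ω) c) (-c)

/-! With `r = q / p`, on the event `c ≤ |ξ|` one has `|ξ| ≤ |ξ| ^ r / c ^ (r - 1)` as in the
Chebyshev inequality, and `|ξ| ^ r ≤ c₀ ^ r * g ^ q` by the growth bound; integrating gives the tail
estimate. Truncation changes `ξ` only on that event, and there by `|ξ| - c`. -/

theorem abs_sub_trunc {Ω : Type*} (ξ : Ω → ℝ) {c : ℝ} (hc : 0 ≤ c) (ω : Ω) :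
    |ξ ω - trunc ξ c ω| = max (|ξ ω| - c) 0 := by
  unfold trunc
  grind

theorem le_rpow_div_rpow_sub_one {x c r : ℝ} (hc : 0 < c) (hcx : c ≤ x) (hr : 1 ≤ r) :
    x ≤ x ^ r / c ^ (r - 1) := by
  have hx : 0 < x := hc.trans_le hcx
  rw [le_div_iff₀ (by positivity)]
  calc x * c ^ (r - 1) ≤ x * x ^ (r - 1) := by gcongr
    _ = x ^ r := by rw [← Real.rpow_one_add' hx.le (by linarith), add_sub_cancel]

theorem rpow_div_le_of_le_mul_rpow {x a y p q : ℝ} (hx : 0 ≤ x) (ha : 0 ≤ a) (hy : 0 ≤ y)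
    (hp : 0 < p) (hq : 0 ≤ q) (hxy : x ≤ a * y ^ p) :
    x ^ (q / p) ≤ a ^ (q / p) * y ^ q :=
  calc x ^ (q / p) ≤ (a * y ^ p) ^ (q / p) := by gcongr
    _ = a ^ (q / p) * y ^ q := by
      rw [Real.mul_rpow ha (by positivity), ← Real.rpow_mul hy, mul_div_cancel₀ q hp.ne']

section Tail

variable {Ω : Type*} [MeasurableSpace Ω] {μ : Measure Ω}

theorem lintegral_abs_sub_trunc_le (ξ : Ω → ℝ) {c : ℝ} (hc : 0 ≤ c) :
    ∫⁻ ω, ENNReal.ofReal |ξ ω - trunc ξ c ω| ∂μ ≤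
      ∫⁻ ω in {ω | c ≤ |ξ ω|}, ENNReal.ofReal |ξ ω| ∂μ := by
  refine (lintegral_mono fun ω => ?_).trans (lintegral_indicator_le _ _)
  rw [abs_sub_trunc ξ hc, Set.indicator_apply]
  split_ifs with h
  · gcongr
    exact max_le (by linarith) (abs_nonneg _)
  · have h_lt : |ξ ω| < c := not_le.mp h
    simp [h_lt.le]

theorem setLIntegral_abs_le_lintegral_div {ξ h : Ω → ℝ} {c r : ℝ} (hc : 0 < c) (hr : 1 ≤ r)
    (h_meas : AEMeasurable h μ) (h_bound : ∀ᵐ ω ∂μ, c ≤ |ξ ω| → |ξ ω| ^ r ≤ h ω) :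
    ∫⁻ ω in {ω | c ≤ |ξ ω|}, ENNReal.ofReal |ξ ω| ∂μ ≤
      (∫⁻ ω, ENNReal.ofReal (h ω) ∂μ) / ENNReal.ofReal (c ^ (r - 1)) := by
  have hcr : 0 < c ^ (r - 1) := by positivity
  have h_tail : ∀ᵐ ω ∂μ, c ≤ |ξ ω| → |ξ ω| ≤ h ω / c ^ (r - 1) := by
    filter_upwards [h_bound] with ω hω hcω
    exact (le_rpow_div_rpow_sub_one hc hcω hr).trans (by gcongr; exact hω hcω)
  calc ∫⁻ ω in {ω | c ≤ |ξ ω|}, ENNReal.ofReal |ξ ω| ∂μ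
      ≤ ∫⁻ ω in {ω | c ≤ |ξ ω|}, ENNReal.ofReal (h ω / c ^ (r - 1)) ∂μ :=
        setLIntegral_mono_ae (h_meas.div_const _).ennreal_ofReal.restrict
          (h_tail.mono fun ω hω hcω => ENNReal.ofReal_le_ofReal (hω hcω))
    _ ≤ ∫⁻ ω, ENNReal.ofReal (h ω / c ^ (r - 1)) ∂μ := setLIntegral_le_lintegral _ _
    _ = (∫⁻ ω, ENNReal.ofReal (h ω) ∂μ) / ENNReal.ofReal (c ^ (r - 1)) := by
        simp_rw [ENNReal.ofReal_div_of_pos hcr, div_eq_mul_inv]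
        exact lintegral_mul_const' _ _ (by simpa using hcr)

theorem setLIntegral_abs_le_of_abs_le_mul_rpow {ξ g : Ω → ℝ} {a c p q C : ℝ} (ha : 0 ≤ a)
    (hc : 0 < c) (hp : 0 < p) (hpq : p ≤ q) (hg : AEMeasurable g μ) (hg0 : ∀ᵐ ω ∂μ, 0 ≤ g ω)
    (hC : ∫⁻ ω, ENNReal.ofReal (g ω ^ q) ∂μ ≤ ENNReal.ofReal C)
    (hξ : ∀ᵐ ω ∂μ, c ≤ |ξ ω| → |ξ ω| ≤ a * g ω ^ p) :
    ∫⁻ ω in {ω | c ≤ |ξ ω|}, ENNReal.ofReal |ξ ω| ∂μ ≤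
      ENNReal.ofReal (a ^ (q / p) * C / c ^ (q / p - 1)) := by
  have har : 0 ≤ a ^ (q / p) := by positivity
  have h_rpow : ∀ᵐ ω ∂μ, c ≤ |ξ ω| → |ξ ω| ^ (q / p) ≤ a ^ (q / p) * g ω ^ q := by
    filter_upwards [hg0, hξ] with ω hgω hξω hcω
    exact rpow_div_le_of_le_mul_rpow (abs_nonneg _) ha hgω hp (hp.le.trans hpq) (hξω hcω)
  calc ∫⁻ ω in {ω | c ≤ |ξ ω|}, ENNReal.ofReal |ξ ω| ∂μ
      ≤ (∫⁻ ω, ENNReal.ofReal (a ^ (q / p) * g ω ^ q) ∂μ) / ENNReal.ofReal (c ^ (q / p - 1)) :=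
        setLIntegral_abs_le_lintegral_div hc ((one_le_div hp).mpr hpq)
          ((hg.pow_const q).const_mul _) h_rpow
    _ = ENNReal.ofReal (a ^ (q / p)) * (∫⁻ ω, ENNReal.ofReal (g ω ^ q) ∂μ) /
          ENNReal.ofReal (c ^ (q / p - 1)) := by
        simp_rw [ENNReal.ofReal_mul har, lintegral_const_mul' _ _ ENNReal.ofReal_ne_top]
    _ ≤ ENNReal.ofReal (a ^ (q / p)) * ENNReal.ofReal C / ENNReal.ofReal (c ^ (q / p - 1)) := by
        gcongr
    _ = ENNReal.ofReal (a ^ (q / p) * C / c ^ (q / p - 1)) := by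
        rw [ENNReal.ofReal_div_of_pos (by positivity), ENNReal.ofReal_mul har]

theorem statement1_general {ξ g : Ω → ℝ} {p q C c₀ c : ℝ} (hp : 0 < p) (hpq : p ≤ q)
    (hg : AEMeasurable g μ) (hg0 : ∀ᵐ ω ∂μ, 0 ≤ g ω)
    (hC : ∫⁻ ω, ENNReal.ofReal (g ω ^ q) ∂μ ≤ ENNReal.ofReal C) (hc₀ : 0 < c₀)
    (hξ : ∀ᵐ ω ∂μ, c₀ ≤ |ξ ω| → |ξ ω| ≤ c₀ * g ω ^ p) (hc : c₀ ≤ c) :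
    (∫⁻ ω, ENNReal.ofReal |ξ ω - trunc ξ c ω| ∂μ) ≤
      (∫⁻ ω in {ω | c ≤ |ξ ω|}, ENNReal.ofReal |ξ ω| ∂μ) ∧
    (∫⁻ ω in {ω | c ≤ |ξ ω|}, ENNReal.ofReal |ξ ω| ∂μ) ≤
      ENNReal.ofReal (c₀ ^ (q / p) * C / c ^ (q / p - 1)) :=
  have hc_pos : 0 < c := hc₀.trans_le hc
  ⟨lintegral_abs_sub_trunc_le ξ hc_pos.le,
    setLIntegral_abs_le_of_abs_le_mul_rpow hc₀.le hc_pos hp hpq hg hg0 hC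
      (hξ.mono fun _ hω hcω => hω (hc.trans hcω))⟩

end Tail

theorem statement1 {Ω : Type*} [MeasurableSpace Ω]
    (μ : Measure Ω) [IsProbabilityMeasure μ]
    (p q : ℝ) (hp : 1 ≤ p) (hpq : p < q)
    (g : Ω → ℝ) (hgmeas : Measurable g) (hg0 : ∀ ω, 0 ≤ g ω)
    (C : ℝ) (hC : ∫⁻ ω, ENNReal.ofReal (g ω ^ q) ∂μ ≤ ENNReal.ofReal C)
    (c₀ : ℝ) (hc₀ : 0 < c₀)
    (ξ : Ω → ℝ) (hξ : Measurable ξ)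
    (hbound : ∀ ω, c₀ ≤ |ξ ω| → |ξ ω| ≤ c₀ * g ω ^ p)
    (c : ℝ) (hc : c₀ ≤ c) :
    (∫⁻ ω, ENNReal.ofReal |ξ ω - trunc ξ c ω| ∂μ) ≤
      (∫⁻ ω in {ω | c ≤ |ξ ω|}, ENNReal.ofReal |ξ ω| ∂μ) ∧
    (∫⁻ ω in {ω | c ≤ |ξ ω|}, ENNReal.ofReal |ξ ω| ∂μ) ≤
      ENNReal.ofReal (c₀ ^ (q / p) * C / c ^ (q / p - 1)) :=
  statement1_general (by linarith) hpq.le hgmeas.aemeasurable (.of_forall hg0) hC hc₀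
    (.of_forall hbound) hc
end

section
/- Let Ω be a nonempty set, I a convex cone of real-valued functions on Ω (so 0 ∈ I), and fix real exponents 1 ≤ p < q. Let g : Ω → [0, ∞) with Φ(g^q; I) < ∞, let c₀ > 0, and let ξ : Ω → ℝ be such that |ξ(ω)| ≤ c₀ · g(ω)^p for every ω with |ξ(ω)| ≥ c₀. Then lim_{c → ∞} Φ(ξ^c; I) = Φ(ξ; I), where the limit is taken in [−∞, ∞]. -/
open Filter Topology

/-- The super-replication functional
`Φ(ξ; I) := inf {c ∈ ℝ : ξ ≤ c + ℓ pointwise for some ℓ ∈ I}`, as an extended real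
(with `inf ∅ = +∞`), for a family `I` of real-valued functions. -/
noncomputable def PhiR {Ω : Type*} (I : Set (Ω → ℝ)) (ξ : Ω → ℝ) : EReal :=
  sInf {x : EReal | ∃ c : ℝ, x = (c : EReal) ∧ ∃ ℓ ∈ I, ∀ ω, ξ ω ≤ c + ℓ ω}

/-!
Where `|ξ|` is large, `g` is large too, so `ξ = O(g ^ p)` improves to `ξ = o(g ^ q)`, both taken as
`|ξ| → ∞`, that is, along the filter `comap |ξ| atTop` on `Ω`. The truncation error `|ξ^c - ξ|`
vanishes where `|ξ| ≤ c` and is at most `|ξ|` elsewhere, hence for every `ε > 0` it is at most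
`ε * g ^ q` on all of `Ω` once `c` is large. Since `g ^ q` is super-replicated at some finite cost
`K` and `I` is a convex cone, a perturbation of size `ε * g ^ q` changes the value of `Φ` by at most
`ε * K`.
-/

open Asymptotics

theorem exists_pos_ereal_add_coe_lt {x y : EReal} (hxy : x < y) :
    ∃ δ : ℝ, 0 < δ ∧ x + δ < y := by
  obtain ⟨r, hxr, hry⟩ := EReal.lt_iff_exists_real_btwn.1 hxy
  obtain ⟨s, hrs, hsy⟩ := EReal.lt_iff_exists_real_btwn.1 hry
  refine ⟨s - r, sub_pos.2 (EReal.coe_lt_coe_iff.1 hrs), ?_⟩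
  calc x + (s - r : ℝ) ≤ r + (s - r : ℝ) := by gcongr
    _ = s := by rw [← EReal.coe_add, add_sub_cancel]
    _ < y := hsy

theorem tendsto_ereal_of_forall_eventually_le_add {ι : Type*} {l : Filter ι} {f : ι → EReal}
    {a : EReal} (h : ∀ δ : ℝ, 0 < δ → ∀ᶠ i in l, f i ≤ a + δ ∧ a ≤ f i + δ) :
    Tendsto f l (𝓝 a) := by
  refine tendsto_order.2 ⟨fun b hb ↦ ?_, fun b hb ↦ ?_⟩
  · obtain ⟨δ, hδ, hbδ⟩ := exists_pos_ereal_add_coe_lt hb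
    filter_upwards [h δ hδ] with i ⟨_, haf⟩
    by_contra! hfb
    exact (haf.trans (add_le_add_left hfb _)).not_gt hbδ
  · obtain ⟨δ, hδ, haδ⟩ := exists_pos_ereal_add_coe_lt hb
    filter_upwards [h δ hδ] with i ⟨hfa, _⟩
    exact hfa.trans_lt haδ

section SuperReplication

variable {Ω ι : Type*} {I : Set (Ω → ℝ)} {C : ConvexCone ℝ (Ω → ℝ)} {ξ η ψ ℓ : Ω → ℝ} {c δ : ℝ}

theorem PhiR_le_coe (hℓ : ℓ ∈ I) (h : ∀ ω, ξ ω ≤ c + ℓ ω) : PhiR I ξ ≤ c :=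
  sInf_le ⟨c, rfl, ℓ, hℓ, h⟩

theorem le_PhiR {a : EReal} (h : ∀ c : ℝ, ∀ ℓ ∈ I, (∀ ω, ξ ω ≤ c + ℓ ω) → a ≤ c) :
    a ≤ PhiR I ξ := by
  refine le_sInf ?_
  rintro _ ⟨c, rfl, ℓ, hℓ, hξ⟩
  exact h c ℓ hℓ hξ

theorem exists_le_add_of_PhiR_lt_top (h : PhiR I ψ < ⊤) :
    ∃ K : ℝ, ∃ ℓ ∈ I, ∀ ω, ψ ω ≤ K + ℓ ω := by
  obtain ⟨_, ⟨K, rfl, hK⟩, -⟩ := sInf_lt_iff.1 h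
  exact ⟨K, hK⟩

theorem PhiR_le_PhiR_add_coe (hℓ : ∀ m ∈ I, m + ℓ ∈ I) (h : ∀ ω, η ω ≤ ξ ω + (c + ℓ ω)) :
    PhiR I η ≤ PhiR I ξ + c := by
  refine (EReal.sub_le_iff_le_add (.inl (EReal.coe_ne_bot c)) (.inl (EReal.coe_ne_top c))).1 ?_
  refine le_PhiR fun d m hm hξ ↦ EReal.sub_le_of_le_add ?_
  refine (PhiR_le_coe (c := d + c) (hℓ m hm) fun ω ↦ ?_).trans_eq (EReal.coe_add d c)
  calc η ω ≤ ξ ω + (c + ℓ ω) := h ω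
    _ ≤ d + m ω + (c + ℓ ω) := by gcongr; exact hξ ω
    _ = d + c + (m + ℓ) ω := by rw [Pi.add_apply, add_add_add_comm]

theorem exists_pos_forall_PhiR_le_add (hψ : PhiR C ψ < ⊤) (hδ : 0 < δ) :
    ∃ ε > 0, ∀ ξ η : Ω → ℝ, (∀ ω, η ω ≤ ξ ω + ε * ψ ω) → PhiR C η ≤ PhiR C ξ + δ := by
  obtain ⟨K, ℓ, hℓ, hK⟩ := exists_le_add_of_PhiR_lt_top hψ
  obtain ⟨ε, hε, hKε⟩ := exists_pos_mul_lt hδ K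
  have add_smul_mem : ∀ m ∈ C, m + ε • ℓ ∈ C := fun m hm ↦ C.add_mem hm (C.smul_mem hε hℓ)
  refine ⟨ε, hε, fun ξ η h ↦ PhiR_le_PhiR_add_coe add_smul_mem fun ω ↦ ?_⟩
  calc η ω ≤ ξ ω + ε * ψ ω := h ω
    _ ≤ ξ ω + ε * (K + ℓ ω) := by gcongr; exact hK ω
    _ = ξ ω + (K * ε + (ε • ℓ) ω) := by rw [Pi.smul_apply, smul_eq_mul]; ring
    _ ≤ ξ ω + (δ + (ε • ℓ) ω) := by gcongr

theorem tendsto_PhiR_of_forall_eventually_abs_sub_le {l : Filter ι} {F : ι → Ω → ℝ}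
    (hψ : PhiR C ψ < ⊤) (h : ∀ ε > 0, ∀ᶠ i in l, ∀ ω, |F i ω - ξ ω| ≤ ε * ψ ω) :
    Tendsto (fun i ↦ PhiR C (F i)) l (𝓝 (PhiR C ξ)) := by
  refine tendsto_ereal_of_forall_eventually_le_add fun δ hδ ↦ ?_
  obtain ⟨ε, hε, hPhi⟩ := exists_pos_forall_PhiR_le_add hψ hδ
  filter_upwards [h ε hε] with i hi
  have hi' ω := abs_sub_le_iff.1 (hi ω)
  exact ⟨hPhi _ _ fun ω ↦ sub_le_iff_le_add'.1 (hi' ω).1,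
    hPhi _ _ fun ω ↦ sub_le_iff_le_add'.1 (hi' ω).2⟩

end SuperReplication

section Truncation

variable {Ω : Type*} {C : ConvexCone ℝ (Ω → ℝ)} {ξ ψ : Ω → ℝ} {c : ℝ} {ω : Ω}

theorem trunc_eq_self (h : |ξ ω| ≤ c) : trunc ξ c ω = ξ ω := by
  obtain ⟨hneg, hpos⟩ := abs_le.1 h
  rw [trunc, min_eq_left hpos, max_eq_left hneg]

theorem abs_trunc_sub_le_abs (hc : 0 ≤ c) : |trunc ξ c ω - ξ ω| ≤ |ξ ω| := by
  unfold trunc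
  grind

theorem eventually_abs_trunc_sub_le (hψ : 0 ≤ ψ) (h : ξ =o[comap (fun ω ↦ |ξ ω|) atTop] ψ)
    {ε : ℝ} (hε : 0 < ε) : ∀ᶠ c in atTop, ∀ ω, |trunc ξ c ω - ξ ω| ≤ ε * ψ ω := by
  obtain ⟨M, hM⟩ := eventually_atTop.1 (eventually_comap.1 (h.bound hε))
  filter_upwards [eventually_ge_atTop M, eventually_ge_atTop 0] with c hMc hc ω
  rcases le_total |ξ ω| c with hξc | hcξ
  · rw [trunc_eq_self hξc, sub_self, abs_zero]
    exact mul_nonneg hε.le (hψ ω)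
  · calc |trunc ξ c ω - ξ ω| ≤ |ξ ω| := abs_trunc_sub_le_abs hc
      _ ≤ ε * ‖ψ ω‖ := hM _ (hMc.trans hcξ) ω rfl
      _ = ε * ψ ω := by rw [Real.norm_of_nonneg (hψ ω)]

theorem tendsto_PhiR_trunc_of_isLittleO (hψ : 0 ≤ ψ) (hPhi : PhiR C ψ < ⊤)
    (h : ξ =o[comap (fun ω ↦ |ξ ω|) atTop] ψ) :
    Tendsto (fun c ↦ PhiR C (trunc ξ c)) atTop (𝓝 (PhiR C ξ)) :=
  tendsto_PhiR_of_forall_eventually_abs_sub_le hPhi fun _ ↦ eventually_abs_trunc_sub_le hψ h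

end Truncation

section Growth

variable {α : Type*} {l : Filter α} {f g : α → ℝ} {p q : ℝ}

theorem isBigO_comap_abs_atTop_of_forall_le {M K : ℝ}
    (h : ∀ x, M ≤ |f x| → |f x| ≤ K * g x) : f =O[comap (fun x ↦ |f x|) atTop] g := by
  refine .of_bound |K| ?_
  filter_upwards [tendsto_comap.eventually_ge_atTop M] with x hx
  calc |f x| ≤ K * g x := h x hx
    _ ≤ |K * g x| := le_abs_self _
    _ = |K| * ‖g x‖ := abs_mul K (g x)

theorem tendsto_atTop_of_tendsto_rpow_atTop (hp : 0 ≤ p) (hg : 0 ≤ g)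
    (h : Tendsto (fun x ↦ g x ^ p) l atTop) : Tendsto g l atTop := by
  refine tendsto_atTop.2 fun M ↦ ?_
  filter_upwards [h.eventually_gt_atTop (|M| ^ p)] with x hx
  by_contra! hgM
  exact hx.not_ge (Real.rpow_le_rpow (hg x) (hgM.le.trans (le_abs_self M)) hp)

theorem isLittleO_rpow_rpow_of_tendsto_atTop (hpq : p < q) (hg : Tendsto g l atTop) :
    (fun x ↦ g x ^ p) =o[l] fun x ↦ g x ^ q := by
  refine .of_tendsto_div_atTop (((tendsto_rpow_atTop (sub_pos.2 hpq)).comp hg).congr' ?_)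
  filter_upwards [hg.eventually_gt_atTop 0] with x hx using Real.rpow_sub hx q p

theorem isLittleO_rpow_of_isBigO_rpow (hp : 0 ≤ p) (hpq : p < q) (hg : 0 ≤ g)
    (hf : Tendsto (fun x ↦ |f x|) l atTop) (hfg : f =O[l] fun x ↦ g x ^ p) :
    f =o[l] fun x ↦ g x ^ q := by
  have hgp : Tendsto (fun x ↦ g x ^ p) l atTop :=
    (hfg.trans_tendsto_norm_atTop hf).congr fun x ↦ Real.norm_of_nonneg (Real.rpow_nonneg (hg x) p)
  exact hfg.trans_isLittleO <| isLittleO_rpow_rpow_of_tendsto_atTop hpq <|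
    tendsto_atTop_of_tendsto_rpow_atTop hp hg hgp

end Growth

theorem statement5_general {Ω : Type*} {C : ConvexCone ℝ (Ω → ℝ)} {p q : ℝ} (hp : 0 ≤ p)
    (hpq : p < q) {g ξ : Ω → ℝ} (hg : 0 ≤ g) (hgq : PhiR C (fun ω ↦ g ω ^ q) < ⊤)
    (hξ : ξ =O[comap (fun ω ↦ |ξ ω|) atTop] fun ω ↦ g ω ^ p) :
    Tendsto (fun c ↦ PhiR C (trunc ξ c)) atTop (𝓝 (PhiR C ξ)) :=
  tendsto_PhiR_trunc_of_isLittleO (fun ω ↦ Real.rpow_nonneg (hg ω) q) hgq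
    (isLittleO_rpow_of_isBigO_rpow hp hpq hg tendsto_comap hξ)

theorem statement5 {Ω : Type*} [Nonempty Ω] (I : Set (Ω → ℝ))
    (hadd : ∀ f ∈ I, ∀ g ∈ I, f + g ∈ I)
    (hsmul : ∀ f ∈ I, ∀ a : ℝ, 0 ≤ a → a • f ∈ I)
    (hzero : (0 : Ω → ℝ) ∈ I)
    (p q : ℝ) (hp : 1 ≤ p) (hpq : p < q)
    (g : Ω → ℝ) (hg0 : ∀ ω, 0 ≤ g ω)
    (hgq : PhiR I (fun ω => g ω ^ q) < ⊤)
    (c₀ : ℝ) (hc₀ : 0 < c₀)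
    (ξ : Ω → ℝ)
    (hbound : ∀ ω, c₀ ≤ |ξ ω| → |ξ ω| ≤ c₀ * g ω ^ p) :
    Tendsto (fun c : ℝ => PhiR I (trunc ξ c)) atTop (𝓝 (PhiR I ξ)) := by
  exact statement5_general (C := ⟨I, fun a ha f hf ↦ hsmul f hf a ha.le, hadd⟩)
    (zero_le_one.trans hp) hpq hg0 hgq (isBigO_comap_abs_atTop_of_forall_le hbound)
end

section
/- Let T > 0, q ≥ 1 a real number, and let ω : [0, T] → ℝ^d be right-continuous with left limits (càdlàg), i.e. for every t ∈ [0, T) the function ω is continuous from the right at t, and for every t ∈ (0, T] the limit of ω(s) as s ↑ t exists. Define τ₀ := 0 and recursively τ_n := inf({t ∈ (τ_{n−1}, T] : |ω(t)|^q > |ω(τ_{n−1})|^q + 1} ∪ {T}) for n ≥ 1, where |·| is the Euclidean norm on ℝ^d. Then: (a) there exists N ∈ ℕ with τ_N = T; and (b) sup_{t ∈ [0, T]} |ω(t)|^q ≤ sup_{n ∈ ℕ} |ω(τ_n)|^q + 1. -/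
open Filter Topology

/-- The recursively defined hitting times `τ₀ = 0`,
`τ_{n+1} = inf ({t ∈ (τ_n, T] : |ω(t)|^q > |ω(τ_n)|^q + 1} ∪ {T})`. -/
noncomputable def hitTimes (T q : ℝ) {d : ℕ} (ω : ℝ → EuclideanSpace ℝ (Fin d)) : ℕ → ℝ
  | 0 => 0
  | n + 1 => sInf ({t : ℝ | t ∈ Set.Ioc (hitTimes T q ω n) T ∧
      ‖ω (hitTimes T q ω n)‖ ^ q + 1 < ‖ω t‖ ^ q} ∪ {T})

/-!
The times increase to a limit `L ≤ T`, and each new time before `T` raises the value of the path by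
at least the threshold, because the path is upper semicontinuous from the right. If `T` were never
reached, the path would therefore be unbounded along a sequence increasing strictly to `L`, although
it is bounded above just before `L`. Between consecutive times the path exceeds its value at the
earlier time by at most the threshold.
-/

lemma tendsto_atTop_of_add_le_succ {R : Type*} [AddCommGroup R] [LinearOrder R]
    [IsOrderedAddMonoid R] [Archimedean R] {u : ℕ → R} {c : R} (hc : 0 < c)
    (hu : ∀ n, u n + c ≤ u (n + 1)) : Tendsto u atTop atTop := by
  have hgrowth : ∀ n : ℕ, u 0 + n • c ≤ u n := fun n ↦ by
    induction n with
    | zero => simp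
    | succ n ih =>
      rw [succ_nsmul, ← add_assoc]
      exact (add_le_add_left ih c).trans (hu n)
  exact tendsto_atTop_mono hgrowth
    (tendsto_atTop_add_const_left _ _ (tendsto_id.atTop_nsmul_const hc))

lemma not_tendsto_comp_atTop_of_strictMono {ι R : Type*} [ConditionallyCompleteLinearOrder ι]
    [TopologicalSpace ι] [OrderTopology ι] [Preorder R] [NoMaxOrder R] {u : ℕ → ι} {f : ι → R}
    (hu : StrictMono u) (hbdd : BddAbove (Set.range u))
    (hf : IsBoundedUnder (· ≤ ·) (𝓝[<] ⨆ n, u n) f) :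
    ¬ Tendsto (f ∘ u) atTop atTop := by
  have hlt : ∀ n, u n < ⨆ n, u n := fun n ↦ (hu n.lt_succ_self).trans_le (le_ciSup hbdd _)
  have hlim : Tendsto u atTop (𝓝[<] ⨆ n, u n) :=
    tendsto_nhdsWithin_iff.2 ⟨tendsto_atTop_ciSup hu.monotone hbdd, .of_forall hlt⟩
  exact fun h ↦ not_isBoundedUnder_of_tendsto_atTop h (IsBounded.mono (tendsto_map.comp hlim) hf)

section Climb

variable {ι : Type*} [ConditionallyCompleteLinearOrder ι] {f : ι → ℝ} {c : ℝ} {a s t T : ι}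

/-- The first time after `s` at which `f` has climbed by more than `c` above `f s`, capped at `T`.
It is an infimum, hence it need not itself be such a time. It is meaningful for `s ≤ T` only: for
`T < s` its value is `T`. -/
noncomputable def climbTime (f : ι → ℝ) (c : ℝ) (T s : ι) : ι :=
  sInf ({t | t ∈ Set.Ioc s T ∧ f s + c < f t} ∪ {T})

/-- The successive climb times of `f` up to the horizon `T`, started at `a`. -/
noncomputable def climbTimes (f : ι → ℝ) (c : ℝ) (T a : ι) : ℕ → ι
  | 0 => a
  | n + 1 => climbTime f c T (climbTimes f c T a n)

lemma mem_lowerBounds_climb (hs : s ≤ T) :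
    s ∈ lowerBounds ({t | t ∈ Set.Ioc s T ∧ f s + c < f t} ∪ {T}) := by
  rintro t (⟨ht, -⟩ | rfl)
  exacts [ht.1.le, hs]

lemma isGLB_climbTime (hs : s ≤ T) :
    IsGLB ({t | t ∈ Set.Ioc s T ∧ f s + c < f t} ∪ {T}) (climbTime f c T s) :=
  isGLB_csInf ⟨T, Or.inr rfl⟩ ⟨s, mem_lowerBounds_climb hs⟩

lemma le_climbTime (hs : s ≤ T) : s ≤ climbTime f c T s :=
  (isGLB_climbTime hs).2 (mem_lowerBounds_climb hs)

lemma climbTime_le (hs : s ≤ T) : climbTime f c T s ≤ T :=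
  (isGLB_climbTime hs).1 (Or.inr rfl)

lemma apply_le_add_of_lt_climbTime (hc : 0 ≤ c) (hs : s ≤ T) (hst : s ≤ t)
    (ht : t < climbTime f c T s) : f t ≤ f s + c := by
  obtain rfl | hst := hst.eq_or_lt
  · exact le_add_of_nonneg_right hc
  · by_contra! hclimb
    exact ht.not_ge ((isGLB_climbTime hs).1 (Or.inl ⟨⟨hst, ht.le.trans (climbTime_le hs)⟩, hclimb⟩))

lemma climbTimes_le (ha : a ≤ T) : ∀ n, climbTimes f c T a n ≤ T
  | 0 => ha
  | n + 1 => climbTime_le (climbTimes_le ha n)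

lemma climbTimes_monotone (ha : a ≤ T) : Monotone (climbTimes f c T a) :=
  monotone_nat_of_le_succ fun n ↦ le_climbTime (climbTimes_le ha n)

lemma bddAbove_range_comp_climbTimes (ha : a ≤ T) (hT : ∃ N, climbTimes f c T a N = T) :
    BddAbove (Set.range fun n ↦ f (climbTimes f c T a n)) := by
  obtain ⟨N, hN⟩ := hT
  refine (isBoundedUnder_of_eventually_le (a := f T) ?_).bddAbove_range
  filter_upwards [eventually_ge_atTop N] with n hn
  have hnT : climbTimes f c T a n = T :=
    (climbTimes_le ha n).antisymm (hN.ge.trans (climbTimes_monotone ha hn))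
  rw [hnT]

lemma exists_apply_le_apply_climbTimes_add (hc : 0 ≤ c) (hT : ∃ N, climbTimes f c T a N = T)
    (ht : t ∈ Set.Icc a T) : ∃ n, f t ≤ f (climbTimes f c T a n) + c := by
  obtain ⟨N, hN⟩ := hT
  obtain rfl | htT := ht.2.eq_or_lt
  · exact ⟨N, by rw [hN]; exact le_add_of_nonneg_right hc⟩
  · obtain ⟨n, hn, hn'⟩ : ∃ n, ¬ t < climbTimes f c T a n ∧ t < climbTimes f c T a (n + 1) :=
      Nat.exists_not_and_succ_of_not_zero_of_exists ht.1.not_gt ⟨N, hN.symm ▸ htT⟩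
    exact ⟨n, apply_le_add_of_lt_climbTime hc (climbTimes_le (ht.1.trans ht.2) n) (not_lt.1 hn) hn'⟩

variable [TopologicalSpace ι] [OrderTopology ι]

lemma add_le_apply_climbTime (hs : s ≤ T) (hlt : climbTime f c T s < T)
    (hf : UpperSemicontinuousWithinAt f (Set.Ici (climbTime f c T s)) (climbTime f c T s)) :
    f s + c ≤ f (climbTime f c T s) := by
  by_contra! hlow
  have hmem := (isGLB_climbTime (f := f) (c := c) hs).frequently_mem ⟨T, Or.inr rfl⟩
  have hltT : ∀ᶠ t in 𝓝[≥] climbTime f c T s, t < T := mem_nhdsWithin_of_mem_nhds (Iio_mem_nhds hlt)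
  obtain ⟨t, ht, hft, htT⟩ := (hmem.and_eventually ((hf _ hlow).and hltT)).exists
  rcases ht with ⟨-, hclimb⟩ | rfl
  exacts [hft.not_gt hclimb, htT.false]

lemma exists_climbTimes_eq (ha : a ≤ T) (hc : 0 < c)
    (hright : ∀ t ∈ Set.Ico a T, UpperSemicontinuousWithinAt f (Set.Ici t) t)
    (hleft : ∀ t ∈ Set.Ioc a T, IsBoundedUnder (· ≤ ·) (𝓝[<] t) f) :
    ∃ N, climbTimes f c T a N = T := by
  by_contra! hne
  set τ := climbTimes f c T a
  have hmono : Monotone τ := climbTimes_monotone ha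
  have hlt : ∀ n, τ n < T := fun n ↦ (climbTimes_le ha n).lt_of_ne (hne n)
  have hclimb : ∀ n, f (τ n) + c ≤ f (τ (n + 1)) := fun n ↦
    add_le_apply_climbTime (hlt n).le (hlt (n + 1)) (hright _ ⟨hmono (n + 1).zero_le, hlt (n + 1)⟩)
  have hstrict : StrictMono (f ∘ τ) :=
    strictMono_nat_of_lt_succ fun n ↦ (lt_add_of_pos_right _ hc).trans_le (hclimb n)
  have hτ : StrictMono τ := hmono.strictMono_of_injective hstrict.injective.of_comp
  have hbdd : BddAbove (Set.range τ) := ⟨T, Set.forall_mem_range.2 fun n ↦ (hlt n).le⟩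
  have hsup : ⨆ n, τ n ∈ Set.Ioc a T :=
    ⟨(hτ zero_lt_one).trans_le (le_ciSup hbdd 1), ciSup_le fun n ↦ (hlt n).le⟩
  exact not_tendsto_comp_atTop_of_strictMono hτ hbdd (hleft _ hsup)
    (tendsto_atTop_of_add_le_succ hc hclimb)

theorem statement7_general (ha : a ≤ T) (hc : 0 < c)
    (hright : ∀ t ∈ Set.Ico a T, UpperSemicontinuousWithinAt f (Set.Ici t) t)
    (hleft : ∀ t ∈ Set.Ioc a T, IsBoundedUnder (· ≤ ·) (𝓝[<] t) f) :
    (∃ N, climbTimes f c T a N = T) ∧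
      ∀ t ∈ Set.Icc a T, f t ≤ (⨆ n, f (climbTimes f c T a n)) + c := by
  have hT := exists_climbTimes_eq ha hc hright hleft
  refine ⟨hT, fun t ht ↦ ?_⟩
  obtain ⟨n, hn⟩ := exists_apply_le_apply_climbTimes_add hc.le hT ht
  grw [hn, le_ciSup (bddAbove_range_comp_climbTimes ha hT) n]

end Climb

lemma hitTimes_eq_climbTimes (T q : ℝ) {d : ℕ} (ω : ℝ → EuclideanSpace ℝ (Fin d)) :
    hitTimes T q ω = climbTimes (fun t ↦ ‖ω t‖ ^ q) 1 T 0 := by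
  ext n
  induction n with
  | zero => rfl
  | succ n ih => simp only [hitTimes, climbTimes, climbTime, ih]

theorem statement7 (T : ℝ) (hT : 0 < T) (q : ℝ) (hq : 1 ≤ q) (d : ℕ)
    (ω : ℝ → EuclideanSpace ℝ (Fin d))
    (hright : ∀ t ∈ Set.Ico (0 : ℝ) T, ContinuousWithinAt ω (Set.Ici t) t)
    (hleft : ∀ t ∈ Set.Ioc (0 : ℝ) T, ∃ L, Tendsto ω (nhdsWithin t (Set.Iio t)) (𝓝 L)) :
    (∃ N : ℕ, hitTimes T q ω N = T) ∧
      ∀ t ∈ Set.Icc (0 : ℝ) T,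
        ‖ω t‖ ^ q ≤ (⨆ n : ℕ, ‖ω (hitTimes T q ω n)‖ ^ q) + 1 := by
  have hcont {l : Filter ℝ} {L} (h : Tendsto ω l (𝓝 L)) :=
    h.norm.rpow_const (Or.inr (zero_le_one.trans hq))
  rw [hitTimes_eq_climbTimes]
  exact statement7_general hT.le one_pos
    (fun t ht ↦ ContinuousWithinAt.upperSemicontinuousWithinAt (hcont (hright t ht)))
    fun t ht ↦ (hleft t ht).elim fun _ hL ↦ (hcont hL).isBoundedUnder_le
end

section
/- Let Ω be a nonempty set and I a convex cone of real-valued functions on Ω (so 0 ∈ I) with Φ(0; I) = 0. Let K₀ := ∅ ⊆ K₁ ⊆ K₂ ⊆ ⋯ be an increasing sequence of subsets of Ω such that Φ(1_{Ω∖K_k}; I) ≤ 2^{−2k} for every k ≥ 1, and define η* : Ω → ℝ by η* := Σ_{k=1}^∞ 2^{−k} · 1_{K_k ∖ K_{k−1}}. Then for all bounded ξ, ζ : Ω → ℝ: |Φ(ξ; I) − Φ(ζ; I)| ≤ 4 · sup_{ω ∈ Ω} |(ξ(ω) − ζ(ω)) · η*(ω)|; in particular |Φ(ξ; I)| ≤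 4 · sup_{ω ∈ Ω} |ξ(ω) η*(ω)| for every bounded ξ. -/
open Filter Topology

/-- `η* := Σ_{k=1}^∞ 2^{−k} · 1_{K_k ∖ K_{k−1}}`. -/
noncomputable def etaStar {Ω : Type*} (K : ℕ → Set Ω) : Ω → ℝ :=
  fun ω => ∑' k : ℕ, (K (k + 1) \ K k).indicator (fun _ => ((2 : ℝ) ^ (k + 1))⁻¹) ω

/-!
`Φ` is sublinear. A function `ξ` bounded above by `M`, and by `a k ≥ 0` on each layer
`K (k + 1) \ K k`, satisfies `ξ ≤ ∑ k < n, a k • 1_{(K k)ᶜ} + M⁺ • 1_{(K n)ᶜ}`, since a point of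
a layer lies outside `K k`. Applying `Φ` and letting `n → ∞` gives `Φ ξ ≤ ∑ a k * p k` whenever
`Φ 1_{(K k)ᶜ} ≤ p k → 0`. If `ξ η* ≤ S`, one may take `a k = S * 2 ^ (k + 1)` and `p k = 4⁻ᵏ`, and
the series sums to `4 S`. Replacing `ξ` by `ξ - ζ` and using subadditivity gives the Lipschitz
estimate.
-/

section SuperReplication

variable {Ω : Type*} {I : Set (Ω → ℝ)} {ξ ζ : Ω → ℝ} {a c d t : ℝ}

/-- The initial capital `c` super-replicates the claim `ξ` by trading in `I`; `PhiR I ξ` is the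
infimum of such `c`. -/
def SuperReplicates (I : Set (Ω → ℝ)) (ξ : Ω → ℝ) (c : ℝ) : Prop :=
  ∃ ℓ ∈ I, ∀ ω, ξ ω ≤ c + ℓ ω

lemma SuperReplicates.PhiR_le (h : SuperReplicates I ξ c) : PhiR I ξ ≤ c :=
  sInf_le ⟨c, rfl, h⟩

lemma SuperReplicates.of_PhiR_lt (h : PhiR I ξ < c) : SuperReplicates I ξ c := by
  obtain ⟨_, ⟨c', rfl, ℓ, hℓ, hξ⟩, hc'⟩ := sInf_lt_iff.1 h
  have hc' : c' < c := EReal.coe_lt_coe_iff.1 hc'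
  exact ⟨ℓ, hℓ, fun ω => (hξ ω).trans (by gcongr)⟩

lemma SuperReplicates.add (hadd : ∀ f ∈ I, ∀ g ∈ I, f + g ∈ I)
    (hξ : SuperReplicates I ξ c) (hζ : SuperReplicates I ζ d) :
    SuperReplicates I (ξ + ζ) (c + d) := by
  obtain ⟨f, hf, hξf⟩ := hξ
  obtain ⟨g, hg, hζg⟩ := hζ
  refine ⟨f + g, hadd f hf g hg, fun ω => ?_⟩
  calc ξ ω + ζ ω ≤ (c + f ω) + (d + g ω) := add_le_add (hξf ω) (hζg ω)
    _ = c + d + (f ω + g ω) := add_add_add_comm ..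

lemma SuperReplicates.smul (hsmul : ∀ f ∈ I, t • f ∈ I) (ht : 0 ≤ t)
    (hξ : SuperReplicates I ξ c) : SuperReplicates I (t • ξ) (t * c) := by
  obtain ⟨f, hf, hξf⟩ := hξ
  refine ⟨t • f, hsmul f hf, fun ω => ?_⟩
  calc t * ξ ω ≤ t * (c + f ω) := by gcongr; exact hξf ω
    _ = t * c + t * f ω := mul_add ..

lemma PhiR_mono : Monotone (PhiR I) := by
  intro ξ ζ hle
  refine sInf_le_sInf ?_
  rintro _ ⟨c, rfl, ℓ, hℓ, hζ⟩
  exact ⟨c, rfl, ℓ, hℓ, fun ω => (hle ω).trans (hζ ω)⟩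

lemma PhiR_const_le (hzero : 0 ∈ I) (c : ℝ) : PhiR I (fun _ => c) ≤ c :=
  SuperReplicates.PhiR_le ⟨0, hzero, by simp⟩

-- With `PhiR I ζ` in place of the real `a` this can fail when `PhiR I ξ = ⊥` and `PhiR I ζ = ⊤`,
-- since `⊥ + ⊤ = ⊥` in `EReal`.
lemma PhiR_add_le (hadd : ∀ f ∈ I, ∀ g ∈ I, f + g ∈ I) (hζ : PhiR I ζ ≤ a) :
    PhiR I (ξ + ζ) ≤ PhiR I ξ + a := by
  refine EReal.le_add_of_forall_gt (.inr (EReal.coe_ne_top a)) (.inr (EReal.coe_ne_bot a))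
    fun x hx y hy => ?_
  obtain ⟨c, hξc, hcx⟩ := EReal.lt_iff_exists_real_btwn.1 hx
  obtain ⟨d, hζd, hdy⟩ := EReal.lt_iff_exists_real_btwn.1 (hζ.trans_lt hy)
  calc PhiR I (ξ + ζ) ≤ ((c + d : ℝ) : EReal) :=
        ((SuperReplicates.of_PhiR_lt hξc).add hadd (.of_PhiR_lt hζd)).PhiR_le
    _ = c + d := EReal.coe_add c d
    _ ≤ x + y := add_le_add hcx.le hdy.le

lemma PhiR_smul_le (hsmul : ∀ f ∈ I, t • f ∈ I) (ht : 0 ≤ t)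
    (hξ : PhiR I ξ ≤ a) : PhiR I (t • ξ) ≤ (t * a : ℝ) := by
  have bound : ∀ ε : ℝ, 0 < ε → PhiR I (t • ξ) ≤ (t * (a + ε) : ℝ) := fun ε hε =>
    ((SuperReplicates.of_PhiR_lt (hξ.trans_lt
      (EReal.coe_lt_coe_iff.2 (lt_add_of_pos_right a hε)))).smul hsmul ht).PhiR_le
  have lim : Tendsto (fun ε : ℝ => ((t * (a + ε) : ℝ) : EReal)) (𝓝[>] 0) (𝓝 (t * a : ℝ)) := by
    have cont : Continuous fun ε : ℝ => ((t * (a + ε) : ℝ) : EReal) :=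
      continuous_coe_real_ereal.comp (by fun_prop)
    simpa only [add_zero] using (cont.tendsto 0).mono_left nhdsWithin_le_nhds
  exact ge_of_tendsto lim (eventually_mem_nhdsWithin.mono bound)

lemma PhiR_sum_smul_le {C : PointedCone ℝ (Ω → ℝ)} {ι : Type*} {s : Finset ι} {f : ι → Ω → ℝ}
    {a p : ι → ℝ} (ha : ∀ i ∈ s, 0 ≤ a i) (hp : ∀ i ∈ s, PhiR C (f i) ≤ p i) :
    PhiR C (∑ i ∈ s, a i • f i) ≤ (∑ i ∈ s, a i * p i : ℝ) := by
  classical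
  induction s using Finset.induction_on with
  | empty => exact PhiR_const_le C.zero_mem 0
  | insert i s hi ih =>
    simp only [Finset.forall_mem_insert] at ha hp
    rw [Finset.sum_insert hi, Finset.sum_insert hi, add_comm, add_comm (a i * p i), EReal.coe_add]
    calc PhiR C (∑ j ∈ s, a j • f j + a i • f i)
        ≤ PhiR C (∑ j ∈ s, a j • f j) + (a i * p i : ℝ) :=
          PhiR_add_le (fun _ hf _ hg => C.add_mem hf hg)
            (PhiR_smul_le (fun _ => C.smul_mem ha.1) ha.1 hp.1)
      _ ≤ (∑ j ∈ s, a j * p j : ℝ) + (a i * p i : ℝ) := by gcongr; exact ih ha.2 hp.2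

end SuperReplication

section Layers

variable {Ω : Type*} {C : PointedCone ℝ (Ω → ℝ)} {K : ℕ → Set Ω} {ξ ζ : Ω → ℝ} {ω : Ω}

lemma exists_lt_mem_diff_of_mem (hK0 : K 0 = ∅) {n : ℕ} (hω : ω ∈ K n) :
    ∃ k < n, ω ∈ K (k + 1) \ K k := by
  induction n with
  | zero => simp [hK0] at hω
  | succ n ih =>
    by_cases hn : ω ∈ K n
    · obtain ⟨k, hk, hωk⟩ := ih hn
      exact ⟨k, hk.trans n.lt_succ_self, hωk⟩
    · exact ⟨n, n.lt_succ_self, hω, hn⟩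

lemma le_sum_smul_indicator_compl (hK0 : K 0 = ∅) {a : ℕ → ℝ} {M : ℝ} (ha : ∀ k, 0 ≤ a k)
    (hM0 : 0 ≤ M) (hM : ∀ ω, ξ ω ≤ M) (hξ : ∀ k, ∀ ω ∈ K (k + 1) \ K k, ξ ω ≤ a k) (n : ℕ) :
    ξ ≤ ∑ k ∈ Finset.range n, a k • (K k)ᶜ.indicator (fun _ => (1 : ℝ))
      + M • (K n)ᶜ.indicator fun _ => (1 : ℝ) := by
  intro ω
  simp only [Pi.add_apply, Finset.sum_apply, Pi.smul_apply, smul_eq_mul]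
  have ind_nonneg : ∀ A : Set Ω, 0 ≤ A.indicator (fun _ => (1 : ℝ)) ω := fun A =>
    Set.indicator_nonneg (fun _ _ => zero_le_one) ω
  have term_nonneg : ∀ k, 0 ≤ a k * (K k)ᶜ.indicator (fun _ => (1 : ℝ)) ω := fun k =>
    mul_nonneg (ha k) (ind_nonneg _)
  by_cases hω : ω ∈ K n
  · obtain ⟨k, hkn, hωk⟩ := exists_lt_mem_diff_of_mem hK0 hω
    calc ξ ω ≤ a k * (K k)ᶜ.indicator (fun _ => (1 : ℝ)) ω := by
          simpa [hωk.2] using hξ k ω hωk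
      _ ≤ ∑ k ∈ Finset.range n, a k * (K k)ᶜ.indicator (fun _ => (1 : ℝ)) ω :=
          Finset.single_le_sum (fun j _ => term_nonneg j) (Finset.mem_range.2 hkn)
      _ ≤ _ := le_add_of_nonneg_right (mul_nonneg hM0 (ind_nonneg _))
  · calc ξ ω ≤ M * (K n)ᶜ.indicator (fun _ => (1 : ℝ)) ω := by simpa [hω] using hM ω
      _ ≤ _ := le_add_of_nonneg_left (Finset.sum_nonneg fun k _ => term_nonneg k)

lemma PhiR_le_of_forall_mem_diff_le (hK0 : K 0 = ∅) {a p : ℕ → ℝ} {B : ℝ} (ha : ∀ k, 0 ≤ a k)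
    (hbdd : BddAbove (Set.range ξ)) (hξ : ∀ k, ∀ ω ∈ K (k + 1) \ K k, ξ ω ≤ a k)
    (hp : ∀ k, PhiR C ((K k)ᶜ.indicator fun _ => (1 : ℝ)) ≤ p k)
    (hp0 : Tendsto p atTop (𝓝 0)) (hB : HasSum (fun k => a k * p k) B) :
    PhiR C ξ ≤ B := by
  obtain ⟨M, hM⟩ := hbdd
  have hM' : ∀ ω, ξ ω ≤ max M 0 := fun ω => le_max_of_le_left (hM ⟨ω, rfl⟩)
  have bound : ∀ n, PhiR C ξ ≤ (∑ k ∈ Finset.range n, a k * p k + max M 0 * p n : ℝ) := fun n =>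
    calc PhiR C ξ
        ≤ PhiR C (∑ k ∈ Finset.range n, a k • (K k)ᶜ.indicator (fun _ => (1 : ℝ))
            + max M 0 • (K n)ᶜ.indicator fun _ => (1 : ℝ)) :=
          PhiR_mono (le_sum_smul_indicator_compl hK0 ha (le_max_right M 0) hM' hξ n)
      _ ≤ PhiR C (∑ k ∈ Finset.range n, a k • (K k)ᶜ.indicator (fun _ => (1 : ℝ)))
            + (max M 0 * p n : ℝ) :=
          PhiR_add_le (fun _ hf _ hg => C.add_mem hf hg)
            (PhiR_smul_le (fun _ => C.smul_mem (le_max_right M 0)) (le_max_right M 0) (hp n))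
      _ ≤ (∑ k ∈ Finset.range n, a k * p k + max M 0 * p n : ℝ) := by
          rw [EReal.coe_add]
          gcongr
          exact PhiR_sum_smul_le (fun k _ => ha k) (fun k _ => hp k)
  have lim : Tendsto (fun n => ∑ k ∈ Finset.range n, a k * p k + max M 0 * p n) atTop (𝓝 B) := by
    simpa only [mul_zero, add_zero] using hB.tendsto_sum_nat.add (hp0.const_mul (max M 0))
  exact ge_of_tendsto' ((continuous_coe_real_ereal.tendsto B).comp lim) bound

lemma etaStar_of_mem_diff (hKmono : Monotone K) {k : ℕ} (hω : ω ∈ K (k + 1) \ K k) :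
    etaStar K ω = ((2 : ℝ) ^ (k + 1))⁻¹ := by
  have other_layers : ∀ j ≠ k, ω ∉ K (j + 1) \ K j := by
    rintro j hj ⟨hωj, hωj'⟩
    rcases hj.lt_or_gt with hlt | hgt
    · exact hω.2 (hKmono hlt hωj)
    · exact hωj' (hKmono hgt hω.1)
  rw [etaStar, tsum_eq_single k fun j hj => Set.indicator_of_notMem (other_layers j hj) _,
    Set.indicator_of_mem hω]

lemma abs_etaStar_le_one (K : ℕ → Set Ω) (ω : Ω) : |etaStar K ω| ≤ 1 := by
  have geometric : HasSum (fun k : ℕ => ((2 : ℝ) ^ (k + 1))⁻¹) 1 := by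
    convert hasSum_geometric_two' 1 using 2 with k
    rw [pow_succ']
    field_simp
  have weight_nonneg : ∀ k : ℕ, 0 ≤ ((2 : ℝ) ^ (k + 1))⁻¹ := fun k => by positivity
  have term_nonneg : ∀ k, 0 ≤ (K (k + 1) \ K k).indicator (fun _ => ((2 : ℝ) ^ (k + 1))⁻¹) ω :=
    fun k => Set.indicator_nonneg (fun _ _ => weight_nonneg k) ω
  have term_le : ∀ k, (K (k + 1) \ K k).indicator (fun _ => ((2 : ℝ) ^ (k + 1))⁻¹) ω
      ≤ ((2 : ℝ) ^ (k + 1))⁻¹ :=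
    fun k => Set.indicator_le_self' (fun _ _ => weight_nonneg k) ω
  rw [etaStar, abs_of_nonneg (tsum_nonneg term_nonneg)]
  exact hasSum_le term_le (geometric.summable.of_nonneg_of_le term_nonneg term_le).hasSum geometric

lemma bddAbove_range_abs_mul_etaStar (K : ℕ → Set Ω) {M : ℝ} (hM : ∀ ω, |ξ ω| ≤ M) :
    BddAbove (Set.range fun ω => |ξ ω * etaStar K ω|) := by
  refine ⟨M, ?_⟩
  rintro _ ⟨ω, rfl⟩
  calc |ξ ω * etaStar K ω| = |ξ ω| * |etaStar K ω| := abs_mul ..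
    _ ≤ |ξ ω| := mul_le_of_le_one_right (abs_nonneg _) (abs_etaStar_le_one K ω)
    _ ≤ M := hM ω

lemma PhiR_le_four_mul_of_mul_etaStar_le (hK0 : K 0 = ∅) (hKmono : Monotone K)
    (hKPhi : ∀ k : ℕ, 1 ≤ k →
      PhiR C ((K k)ᶜ.indicator fun _ => (1 : ℝ)) ≤ ((((2 : ℝ) ^ (2 * k))⁻¹ : ℝ) : EReal))
    (hbdd : BddAbove (Set.range ξ)) {S : ℝ} (hS0 : 0 ≤ S) (hS : ∀ ω, ξ ω * etaStar K ω ≤ S) :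
    PhiR C ξ ≤ (4 * S : ℝ) := by
  have layer_bound : ∀ k, ∀ ω ∈ K (k + 1) \ K k, ξ ω ≤ S * 2 ^ (k + 1) := fun k ω hω => by
    have hSω := hS ω
    rwa [etaStar_of_mem_diff hKmono hω, mul_inv_le_iff₀ (by positivity)] at hSω
  have tail_bound : ∀ k : ℕ, PhiR C ((K k)ᶜ.indicator fun _ => (1 : ℝ))
      ≤ (((1 / 4 : ℝ) ^ k : ℝ) : EReal) := by
    intro k
    rcases k.eq_zero_or_pos with rfl | hk
    · simpa [hK0] using PhiR_const_le C.zero_mem 1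
    · convert hKPhi k hk using 2
      rw [pow_mul, one_div, inv_pow]
      norm_num
  have series : HasSum (fun k : ℕ => S * 2 ^ (k + 1) * (1 / 4 : ℝ) ^ k) (4 * S) := by
    have term_eq (k : ℕ) : S * 2 ^ (k + 1) * (1 / 4 : ℝ) ^ k = 2 * S * (1 / 2) ^ k := by
      rw [show (1 / 2 : ℝ) = 2 * (1 / 4) by norm_num, mul_pow]
      ring
    have sum_eq : 4 * S = 2 * S * 2 := by ring
    simpa only [term_eq, sum_eq] using hasSum_geometric_two.mul_left (2 * S)
  exact PhiR_le_of_forall_mem_diff_le hK0 (fun k => by positivity) hbdd layer_bound tail_bound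
    (tendsto_pow_atTop_nhds_zero_of_lt_one (by norm_num) (by norm_num)) series

lemma PhiR_le_add_four_mul_iSup (hK0 : K 0 = ∅) (hKmono : Monotone K)
    (hKPhi : ∀ k : ℕ, 1 ≤ k →
      PhiR C ((K k)ᶜ.indicator fun _ => (1 : ℝ)) ≤ ((((2 : ℝ) ^ (2 * k))⁻¹ : ℝ) : EReal))
    {M : ℝ} (hM : ∀ ω, |ξ ω - ζ ω| ≤ M) :
    PhiR C ξ ≤ PhiR C ζ + ((4 * ⨆ ω, |(ξ ω - ζ ω) * etaStar K ω| : ℝ) : EReal) := by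
  have hbdd : BddAbove (Set.range (ξ - ζ)) :=
    ⟨M, Set.forall_mem_range.2 fun ω => (le_abs_self _).trans (hM ω)⟩
  have diff_bound : PhiR C (ξ - ζ) ≤ ((4 * ⨆ ω, |(ξ ω - ζ ω) * etaStar K ω| : ℝ) : EReal) :=
    PhiR_le_four_mul_of_mul_etaStar_le hK0 hKmono hKPhi hbdd
      (Real.iSup_nonneg fun _ => abs_nonneg _) fun ω => (le_abs_self _).trans <|
        le_ciSup (bddAbove_range_abs_mul_etaStar (ξ := ξ - ζ) K hM) ω
  simpa only [add_sub_cancel] using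
    PhiR_add_le (ξ := ζ) (fun _ hf _ hg => C.add_mem hf hg) diff_bound

end Layers

theorem statement10 {Ω : Type*} [Nonempty Ω] (I : Set (Ω → ℝ))
    (hadd : ∀ f ∈ I, ∀ g ∈ I, f + g ∈ I)
    (hsmul : ∀ f ∈ I, ∀ a : ℝ, 0 ≤ a → a • f ∈ I)
    (hzero : (0 : Ω → ℝ) ∈ I)
    (hPhi0 : PhiR I 0 = 0)
    (K : ℕ → Set Ω) (hK0 : K 0 = ∅) (hKmono : Monotone K)
    (hKPhi : ∀ k : ℕ, 1 ≤ k →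
      PhiR I ((K k)ᶜ.indicator fun _ => (1 : ℝ)) ≤ ((((2 : ℝ) ^ (2 * k))⁻¹ : ℝ) : EReal)) :
    ∀ ξ ζ : Ω → ℝ, (∃ M : ℝ, ∀ ω, |ξ ω| ≤ M) → (∃ M : ℝ, ∀ ω, |ζ ω| ≤ M) →
      (PhiR I ξ ≤ PhiR I ζ
          + (((4 * ⨆ ω, |(ξ ω - ζ ω) * etaStar K ω|) : ℝ) : EReal) ∧
        PhiR I ζ ≤ PhiR I ξ
          + (((4 * ⨆ ω, |(ξ ω - ζ ω) * etaStar K ω|) : ℝ) : EReal)) ∧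
      (PhiR I ξ ≤ (((4 * ⨆ ω, |ξ ω * etaStar K ω|) : ℝ) : EReal) ∧
        ((-(4 * ⨆ ω, |ξ ω * etaStar K ω|) : ℝ) : EReal) ≤ PhiR I ξ) := by
  rintro ξ ζ ⟨Mξ, hMξ⟩ ⟨Mζ, hMζ⟩
  let C : PointedCone ℝ (Ω → ℝ) :=
    { carrier := I
      add_mem' := fun hf hg => hadd _ hf _ hg
      zero_mem' := hzero
      smul_mem' := fun a _ hf => hsmul _ hf a a.2 }
  have lipschitz {f g : Ω → ℝ} {M : ℝ} (hM : ∀ ω, |f ω - g ω| ≤ M) :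
      PhiR I f ≤ PhiR I g + ((4 * ⨆ ω, |(f ω - g ω) * etaStar K ω| : ℝ) : EReal) :=
    PhiR_le_add_four_mul_iSup (C := C) hK0 hKmono hKPhi hM
  have hdiff : ∀ ω, |ξ ω - ζ ω| ≤ Mξ + Mζ := fun ω =>
    (abs_sub _ _).trans (add_le_add (hMξ ω) (hMζ ω))
  refine ⟨⟨lipschitz hdiff, ?_⟩, ?_, ?_⟩
  · simpa only [abs_mul, abs_sub_comm] using
      lipschitz fun ω => (abs_sub_comm _ _).trans_le (hdiff ω)
  · simpa [hPhi0] using lipschitz (f := ξ) (g := 0) (by simpa using hMξ)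
  · have h := lipschitz (f := 0) (g := ξ) (by simpa using hMξ)
    simp only [hPhi0, Pi.zero_apply, zero_sub, neg_mul, abs_neg] at h
    rw [EReal.coe_neg, ← zero_sub]
    exact EReal.sub_le_of_le_add h
end

section
/- Let Ω be a perfectly normal Hausdorff topological space equipped with its Borel σ-algebra, and let 𝒬 be a nonempty convex set of Borel probability measures on Ω that is compact in the topology of weak convergence (the coarsest topology making Q ↦ ∫ ξ dQ continuous for every bounded continuous ξ : Ω → ℝ). Then for every bounded upper semicontinuous η : Ω → ℝ: sup_{Q ∈ 𝒬} ∫ η dQ = inf{ sup_{Q ∈ 𝒬} ∫ ξ dQ : ξ bounded continuous on Ω with η ≤ ξ pointwise }. -/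
open MeasureTheory Filter Topology

/-!
By perfect normality each closed set `{η ≥ q}`, `q` rational, is the zero set of a continuous
`g : Ω → [0, 1]`, and the functions `max q (M - n * g)` lie above `η` and are eventually equal to
`q` wherever `η < q`. Their running minima over all `q` and `n` decrease pointwise to `η`, so
`∫ η dQ` is the infimum of `∫ ξ dQ` over the bounded continuous `ξ ≥ η`, for each single `Q`.
These `ξ` form a downward directed family and each `Q ↦ ∫ ξ dQ` is continuous, so on a compact set
of measures the supremum and the infimum may be exchanged, as in Dini's theorem.
-/

open scoped BoundedContinuousFunction

section Exchange

variable {X ι α : Type*} [TopologicalSpace X] [CompleteLinearOrder α]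

lemma exists_forall_mem_lt_of_isCompact_of_directed [Nonempty ι] {K : Set X} (hK : IsCompact K)
    {f : ι → X → α} (hf : ∀ i, UpperSemicontinuousOn (f i) K) (hdir : Directed (· ≥ ·) f)
    {c : α} (hc : ∀ x ∈ K, ⨅ i, f i x < c) : ∃ i, ∀ x ∈ K, f i x < c := by
  refine hK.induction_on (p := fun s => ∃ i, ∀ x ∈ s, f i x < c) ?_ ?_ ?_ fun x hx => ?_
  · exact ⟨Classical.arbitrary ι, fun _ => False.elim⟩
  · exact fun s t hst ⟨i, hi⟩ => ⟨i, fun x hx => hi x (hst hx)⟩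
  · rintro s t ⟨i, hi⟩ ⟨j, hj⟩
    obtain ⟨k, hki, hkj⟩ := hdir i j
    exact ⟨k, fun x hx => hx.elim (fun hs => (hki x).trans_lt (hi x hs))
      fun ht => (hkj x).trans_lt (hj x ht)⟩
  · obtain ⟨i, hi⟩ := iInf_lt_iff.1 (hc x hx)
    exact ⟨{y | f i y < c}, hf i x hx c hi, i, fun _ hy => hy⟩

lemma iSup_iInf_eq_iInf_iSup_of_isCompact_of_directed [DenselyOrdered α] [Nonempty ι] {K : Set X}
    (hK : IsCompact K) {f : ι → X → α} (hf : ∀ i, UpperSemicontinuousOn (f i) K)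
    (hdir : Directed (· ≥ ·) f) : ⨆ x ∈ K, ⨅ i, f i x = ⨅ i, ⨆ x ∈ K, f i x := by
  apply le_antisymm
  · exact iSup₂_le fun x hx => iInf_mono fun i => le_iSup₂ (f := fun x _ => f i x) x hx
  · refine le_of_forall_gt_imp_ge_of_dense fun c hc => ?_
    obtain ⟨i, hi⟩ := exists_forall_mem_lt_of_isCompact_of_directed hK hf hdir
      fun x hx => (le_iSup₂ (f := fun x _ => ⨅ i, f i x) x hx).trans_lt hc
    exact iInf_le_of_le i (iSup₂_le fun x hx => (hi x hx).le)

end Exchange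

lemma exists_antitone_mem_le_of_infClosed {α : Type*} [SemilatticeInf α] {S : Set α}
    (hS : InfClosed S) {x : ℕ → α} (hx : ∀ n, x n ∈ S) :
    ∃ y : ℕ → α, Antitone y ∧ (∀ n, y n ∈ S) ∧ ∀ n, y n ≤ x n :=
  ⟨fun n => (Finset.range (n + 1)).inf' Finset.nonempty_range_add_one x,
    fun _ _ hmn => Finset.inf'_mono x (Finset.range_mono (Nat.succ_le_succ hmn)) _,
    fun _ => hS.finsetInf'_mem _ fun n _ => hx n,
    fun n => Finset.inf'_le x (Finset.self_mem_range_succ n)⟩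

section Majorants

variable {Ω : Type*} [TopologicalSpace Ω]

/-- The bounded continuous functions lying pointwise above `η`: the index set of the infimum by
which the integral of an upper semicontinuous `η` is approximated. -/
def continuousMajorants (η : Ω → ℝ) : Set (Ω →ᵇ ℝ) := {ξ | ∀ ω, η ω ≤ ξ ω}

lemma nonempty_continuousMajorants {η : Ω → ℝ} (hη : BddAbove (Set.range η)) :
    (continuousMajorants η).Nonempty := by
  obtain ⟨M, hM⟩ := hη
  exact ⟨.const Ω M, fun ω => hM ⟨ω, rfl⟩⟩

lemma infClosed_continuousMajorants (η : Ω → ℝ) : InfClosed (continuousMajorants η) :=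
  fun _ hξ _ hξ' ω => le_inf (hξ ω) (hξ' ω)

lemma exists_seq_continuousMajorants_eq_of_lt [PerfectlyNormalSpace Ω] {η : Ω → ℝ}
    (hη : UpperSemicontinuous η) (hbdd : BddAbove (Set.range η)) (q : ℝ) :
    ∃ h : ℕ → Ω →ᵇ ℝ, (∀ n, h n ∈ continuousMajorants η) ∧ ∀ ω, η ω < q → ∃ n, h n ω = q := by
  obtain ⟨M, hM⟩ := hbdd
  obtain ⟨g, hg, hg01⟩ := perfectlyNormalSpace_iff_forall_isClosed_preimage_zero.1 ‹_›
    (η ⁻¹' Set.Ici q) (hη.isClosed_preimage q)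
  have hzero (ω : Ω) : g ω = 0 ↔ q ≤ η ω := (Set.ext_iff.1 hg ω).symm
  have hbound (n : ℕ) (ω : Ω) : max q (M - n * g ω) ∈ Set.Icc q (max q M) :=
    ⟨le_max_left _ _, max_le_max_left q
      (sub_le_self M (mul_nonneg n.cast_nonneg (hg01 ω).1))⟩
  let h (n : ℕ) : Ω →ᵇ ℝ := .mkOfBound ⟨fun ω => max q (M - n * g ω), by fun_prop⟩
    (max q M - q) fun _ _ => Real.dist_le_of_mem_Icc (hbound n _) (hbound n _)
  refine ⟨h, fun n ω => ?_, fun ω hω => ?_⟩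
  · change η ω ≤ max q (M - n * g ω)
    rcases lt_or_ge (η ω) q with hlt | hge
    · exact hlt.le.trans (le_max_left _ _)
    · rw [(hzero ω).2 hge, mul_zero, sub_zero]
      exact (hM ⟨ω, rfl⟩).trans (le_max_right _ _)
  · have hpos : 0 < g ω := (hg01 ω).1.lt_of_ne' fun h0 => hω.not_ge ((hzero ω).1 h0)
    obtain ⟨n, hn⟩ := Archimedean.arch (M - q) hpos
    rw [nsmul_eq_mul] at hn
    exact ⟨n, max_eq_left (by linarith)⟩

lemma exists_seq_continuousMajorants_isGLB [PerfectlyNormalSpace Ω] {η : Ω → ℝ}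
    (hη : UpperSemicontinuous η) (hbdd : BddAbove (Set.range η)) :
    ∃ ξ : ℕ → Ω →ᵇ ℝ, ∀ ω, IsGLB (Set.range fun n => ξ n ω) (η ω) := by
  choose h hmaj heq using fun q : ℚ => exists_seq_continuousMajorants_eq_of_lt hη hbdd q
  obtain ⟨e, he⟩ := exists_surjective_nat (ℚ × ℕ)
  refine ⟨fun n => h (e n).1 (e n).2, fun ω => ⟨?_, fun b hb => ?_⟩⟩
  · rintro _ ⟨n, rfl⟩
    exact hmaj _ _ ω
  · refine le_of_forall_gt_imp_ge_of_dense fun c hc => ?_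
    obtain ⟨q, hηq, hqc⟩ := exists_rat_btwn hc
    obtain ⟨n, hn⟩ := heq q ω hηq
    obtain ⟨k, hk⟩ := he (q, n)
    have hbq : b ≤ h (e k).1 (e k).2 ω := hb ⟨k, rfl⟩
    rw [hk, hn] at hbq
    exact hbq.trans hqc.le

theorem exists_antitone_boundedContinuousFunction_tendsto [PerfectlyNormalSpace Ω] {η : Ω → ℝ}
    (hη : UpperSemicontinuous η) (hbdd : BddAbove (Set.range η)) :
    ∃ ξ : ℕ → Ω →ᵇ ℝ, Antitone ξ ∧ (∀ n, ξ n ∈ continuousMajorants η) ∧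
      ∀ ω, Tendsto (fun n => ξ n ω) atTop (𝓝 (η ω)) := by
  obtain ⟨ξ, hξ⟩ := exists_seq_continuousMajorants_isGLB hη hbdd
  have hξmaj (n : ℕ) : ξ n ∈ continuousMajorants η := fun ω => (hξ ω).1 ⟨n, rfl⟩
  obtain ⟨ζ, hanti, hmaj, hle⟩ :=
    exists_antitone_mem_le_of_infClosed (infClosed_continuousMajorants η) hξmaj
  refine ⟨ζ, hanti, hmaj, fun ω => tendsto_atTop_isGLB (fun _ _ hmn => hanti hmn ω) ⟨?_, ?_⟩⟩
  · exact Set.forall_mem_range.2 fun n => hmaj n ω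
  · exact fun b hb => (hξ ω).2 (Set.forall_mem_range.2 fun n => (hb ⟨n, rfl⟩).trans (hle n ω))

variable [MeasurableSpace Ω] [OpensMeasurableSpace Ω]

theorem iInf_integral_continuousMajorants [PerfectlyNormalSpace Ω] (Q : Measure Ω)
    [IsFiniteMeasure Q] {η : Ω → ℝ} (hη : UpperSemicontinuous η) (hbdd : BddAbove (Set.range η))
    (hint : Integrable η Q) :
    ⨅ ξ : continuousMajorants η, ((∫ ω, (ξ : Ω →ᵇ ℝ) ω ∂Q : ℝ) : EReal) =
      ((∫ ω, η ω ∂Q : ℝ) : EReal) := by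
  apply le_antisymm
  · obtain ⟨ξ, hanti, hmaj, hlim⟩ := exists_antitone_boundedContinuousFunction_tendsto hη hbdd
    have hlim_integral : Tendsto (fun n => ∫ ω, ξ n ω ∂Q) atTop (𝓝 (∫ ω, η ω ∂Q)) :=
      integral_tendsto_of_tendsto_of_antitone (fun n => (ξ n).integrable Q) hint
        (ae_of_all _ fun ω _ _ hmn => hanti hmn ω) (ae_of_all _ hlim)
    exact ge_of_tendsto' ((continuous_coe_real_ereal.tendsto _).comp hlim_integral)
      fun n => iInf_le (fun ξ : continuousMajorants η =>
        ((∫ ω, (ξ : Ω →ᵇ ℝ) ω ∂Q : ℝ) : EReal)) ⟨ξ n, hmaj n⟩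
  · exact le_iInf fun ξ =>
      EReal.coe_le_coe_iff.2 (integral_mono hint (ξ.1.integrable Q) ξ.2)

lemma directed_integral_continuousMajorants (η : Ω → ℝ) :
    Directed (· ≥ ·) fun (ξ : continuousMajorants η) (Q : FiniteMeasure Ω) =>
      ((∫ ω, (ξ : Ω →ᵇ ℝ) ω ∂(Q : Measure Ω) : ℝ) : EReal) := by
  have integral_mono_coe {ξ ξ' : Ω →ᵇ ℝ} (h : ξ ≤ ξ') (Q : FiniteMeasure Ω) :
      ((∫ ω, ξ ω ∂(Q : Measure Ω) : ℝ) : EReal) ≤ ((∫ ω, ξ' ω ∂(Q : Measure Ω) : ℝ) : EReal) :=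
    EReal.coe_le_coe_iff.2 (integral_mono (ξ.integrable _) (ξ'.integrable _) h)
  exact fun ξ ξ' => ⟨⟨ξ.1 ⊓ ξ'.1, infClosed_continuousMajorants η ξ.2 ξ'.2⟩,
    integral_mono_coe inf_le_left, integral_mono_coe inf_le_right⟩

lemma continuous_coe_integral_finiteMeasure (ξ : Ω →ᵇ ℝ) :
    Continuous fun Q : FiniteMeasure Ω => ((∫ ω, ξ ω ∂(Q : Measure Ω) : ℝ) : EReal) :=
  continuous_coe_real_ereal.comp
    (FiniteMeasure.continuous_integral_boundedContinuousFunction ξ)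

end Majorants

theorem statement11_general {Ω : Type*} [TopologicalSpace Ω] [PerfectlyNormalSpace Ω]
    [MeasurableSpace Ω] [OpensMeasurableSpace Ω] {𝒬 : Set (FiniteMeasure Ω)}
    (h𝒬comp : IsCompact 𝒬) {η : Ω → ℝ} (hη : UpperSemicontinuous η)
    (hbdd : BddAbove (Set.range η)) (hint : ∀ Q ∈ 𝒬, Integrable η (Q : Measure Ω)) :
    (⨆ Q ∈ 𝒬, ((∫ ω, η ω ∂(Q : Measure Ω) : ℝ) : EReal)) =
      ⨅ ξ ∈ {ξ : Ω →ᵇ ℝ | ∀ ω, η ω ≤ ξ ω},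
        ⨆ Q ∈ 𝒬, ((∫ ω, ξ ω ∂(Q : Measure Ω) : ℝ) : EReal) := by
  have : Nonempty (continuousMajorants η) := (nonempty_continuousMajorants hbdd).to_subtype
  calc
    _ = ⨆ Q ∈ 𝒬, ⨅ ξ : continuousMajorants η,
          ((∫ ω, (ξ : Ω →ᵇ ℝ) ω ∂(Q : Measure Ω) : ℝ) : EReal) :=
      biSup_congr fun Q hQ => (iInf_integral_continuousMajorants Q hη hbdd (hint Q hQ)).symm
    _ = ⨅ ξ : continuousMajorants η, ⨆ Q ∈ 𝒬,
          ((∫ ω, (ξ : Ω →ᵇ ℝ) ω ∂(Q : Measure Ω) : ℝ) : EReal) :=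
      iSup_iInf_eq_iInf_iSup_of_isCompact_of_directed h𝒬comp
        (fun ξ => (continuous_coe_integral_finiteMeasure ξ.1).continuousOn.upperSemicontinuousOn)
        (directed_integral_continuousMajorants η)
    _ = _ := iInf_subtype

theorem statement11 {Ω : Type*} [TopologicalSpace Ω] [T2Space Ω] [PerfectlyNormalSpace Ω]
    [MeasurableSpace Ω] [BorelSpace Ω]
    (𝒬 : Set (ProbabilityMeasure Ω)) (h𝒬ne : 𝒬.Nonempty)
    (h𝒬conv : ∀ Q₁ ∈ 𝒬, ∀ Q₂ ∈ 𝒬, ∀ r : ENNReal, r ≤ 1 →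
      ∃ Q ∈ 𝒬, (Q : Measure Ω) = r • (Q₁ : Measure Ω) + (1 - r) • (Q₂ : Measure Ω))
    (h𝒬comp : IsCompact 𝒬)
    (η : Ω → ℝ) (hη : UpperSemicontinuous η) (M : ℝ) (hM : ∀ ω, |η ω| ≤ M) :
    (⨆ Q ∈ 𝒬, ((∫ ω, η ω ∂(Q : Measure Ω) : ℝ) : EReal)) =
      ⨅ ξ ∈ {ξ : BoundedContinuousFunction Ω ℝ | ∀ ω, η ω ≤ ξ ω},
        ⨆ Q ∈ 𝒬, ((∫ ω, ξ ω ∂(Q : Measure Ω) : ℝ) : EReal) := by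
  simpa only [iSup_image, ProbabilityMeasure.toMeasure_comp_toFiniteMeasure_eq_toMeasure] using
    statement11_general (h𝒬comp.image ProbabilityMeasure.toFiniteMeasure_continuous) hη
      ⟨M, Set.forall_mem_range.2 fun ω => le_of_abs_le (hM ω)⟩
      fun _ _ => .of_bound hη.measurable.aestronglyMeasurable M (ae_of_all _ hM)
end

section
/- Let Ω be a perfectly normal Hausdorff topological space equipped with its Borel σ-algebra, and let 𝒬 be a nonempty set of Borel probability measures on Ω that is sequentially compact in the topology of weak convergence (every sequence in 𝒬 has a subsequence converging weakly to an element of 𝒬). Let (η_n) be a sequence of bounded upper semicontinuous functions Ω → ℝ decreasing pointwise to a bounded function η* : Ω → ℝ. Then lim_{n → ∞} sup_{Q ∈ 𝒬} ∫ η_n dQ = sup_{Q ∈ 𝒬} ∫ η* dQ. -/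
open MeasureTheory Filter Topology

/-!
On a perfectly normal space every open set is the positivity set of a continuous function, so a
lower semicontinuous function that is bounded below is an increasing limit of bounded continuous
functions. By monotone convergence its integral is then a supremum of weakly continuous functions
of the measure. Hence `Q ↦ ∫ η n ∂Q` is upper semicontinuous for each `n`, and infimum over `n`
and supremum over `Q` commute by the argument of Dini's theorem: a cluster point of measures `Q n`
with `c < ∫ η n ∂(Q n)` satisfies `c ≤ ∫ η m ∂Q` for every `m`.
-/

section Minimax

variable {X β : Type*} [TopologicalSpace X] [CompleteLinearOrder β] [DenselyOrdered β]
  {K : Set X} {g : ℕ → X → β}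

theorem iInf_iSup_eq_iSup_iInf_of_isCountablyCompact (hK : IsCountablyCompact K)
    (hg : ∀ n, UpperSemicontinuousOn (g n) K) (hanti : ∀ x ∈ K, Antitone fun n => g n x) :
    ⨅ n, ⨆ x ∈ K, g n x = ⨆ x ∈ K, ⨅ n, g n x := by
  refine le_antisymm (le_of_forall_lt_imp_le_of_dense fun c hc => ?_) <|
    iSup₂_le fun x hx => iInf_mono fun n => le_iSup₂_of_le x hx le_rfl
  have hlarge : ∀ n, ∃ x ∈ K, c < g n x := fun n => by
    simpa only [lt_iSup_iff, exists_prop] using hc.trans_le (iInf_le _ n)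
  choose u huK hcu using hlarge
  obtain ⟨a, haK, ha⟩ := hK.seq_clusterPt u (.of_forall huK)
  refine le_iSup₂_of_le a haK (le_iInf fun m => ?_)
  by_contra! hlt
  have hnear : ∀ᶠ x in 𝓝 a, x ∈ K → g m x < c := eventually_nhdsWithin_iff.1 (hg m a haK c hlt)
  obtain ⟨n, hn, hmn⟩ := ((ha.frequently hnear).and_eventually (eventually_ge_atTop m)).exists
  exact ((hcu n).trans_le (hanti _ (huK n) hmn)).not_gt (hn (huK n))

theorem tendsto_iSup_of_antitone_of_isCountablyCompact [TopologicalSpace β]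
    [OrderTopology β] {gLim : X → β} (hK : IsCountablyCompact K)
    (hg : ∀ n, UpperSemicontinuousOn (g n) K) (hanti : ∀ x ∈ K, Antitone fun n => g n x)
    (hlim : ∀ x ∈ K, Tendsto (fun n => g n x) atTop (𝓝 (gLim x))) :
    Tendsto (fun n => ⨆ x ∈ K, g n x) atTop (𝓝 (⨆ x ∈ K, gLim x)) := by
  have hinf : ∀ x ∈ K, gLim x = ⨅ n, g n x := fun x hx =>
    tendsto_nhds_unique (hlim x hx) (tendsto_atTop_iInf (hanti x hx))
  rw [biSup_congr hinf, ← iInf_iSup_eq_iSup_iInf_of_isCountablyCompact hK hg hanti]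
  exact tendsto_atTop_iInf fun m n hmn => iSup₂_mono fun x hx => hanti x hx hmn

end Minimax

section PerfectlyNormal

variable {Ω : Type*} [TopologicalSpace Ω] [PerfectlyNormalSpace Ω] {f : Ω → ℝ} {m : ℝ}

theorem exists_continuousMap_pos_iff_mem_of_isOpen {U : Set Ω} (hU : IsOpen U) :
    ∃ g : C(Ω, ℝ), (∀ x, 0 ≤ g x) ∧ ∀ x, 0 < g x ↔ x ∈ U := by
  obtain ⟨g, hUg, hg⟩ :=
    perfectlyNormalSpace_iff_forall_isClosed_preimage_zero.1 ‹_› Uᶜ hU.isClosed_compl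
  refine ⟨g, fun x => (hg x).1, fun x => ?_⟩
  have hzero : x ∉ U ↔ g x = 0 := Set.ext_iff.1 hUg x
  rw [(hg x).1.lt_iff_ne', ne_eq, ← hzero, not_not]

theorem exists_boundedContinuous_isLUB_of_lowerSemicontinuous
    (hf : LowerSemicontinuous f) (hm : ∀ x, m ≤ f x) :
    ∃ F : ℕ → BoundedContinuousFunction Ω ℝ, ∀ x, IsLUB (Set.range fun n => F n x) (f x) := by
  choose g hg0 hg using fun q : ℚ =>
    exists_continuousMap_pos_iff_mem_of_isOpen (hf.isOpen_preimage q)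
  -- As `n → ∞`, `F (q, n)` tends to `max m q` on `{x | q < f x}` and is at most `m` elsewhere.
  let F : ℚ × ℕ → BoundedContinuousFunction Ω ℝ := fun i =>
    .ofNormedAddCommGroup (fun x => min (max m i.1) (m + i.2 * g i.1 x)) (by fun_prop)
      (max |m| |max m i.1|) fun x => abs_le_max_abs_abs
        (le_min (le_max_left _ _) (le_add_of_nonneg_right (mul_nonneg i.2.cast_nonneg (hg0 _ x))))
        (min_le_left _ _)
  have hF_le : ∀ i x, F i x ≤ f x := by
    rintro ⟨q, n⟩ x
    rcases (hg0 q x).eq_or_lt with hzero | hpos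
    · exact (min_le_right _ _).trans (by simpa [← hzero] using hm x)
    · exact (min_le_left _ _).trans (max_le (hm x) ((hg q x).1 hpos).le)
  have hF_approx : ∀ x b, b < f x → ∃ i, b < F i x := by
    intro x b hb
    obtain ⟨q, hbq, hqf⟩ := exists_rat_btwn hb
    obtain ⟨n, hn⟩ := exists_lt_nsmul ((hg q x).2 hqf) (b - m)
    rw [nsmul_eq_mul] at hn
    exact ⟨(q, n), lt_min (lt_max_of_lt_right hbq) (sub_lt_iff_lt_add'.1 hn)⟩
  obtain ⟨e, he⟩ := exists_surjective_nat (ℚ × ℕ)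
  refine ⟨F ∘ e, fun x => ⟨Set.forall_mem_range.2 fun n => hF_le _ x, fun b hb => ?_⟩⟩
  by_contra! hlt
  obtain ⟨i, hi⟩ := hF_approx x b hlt
  obtain ⟨n, rfl⟩ := he i
  exact hi.not_ge (hb ⟨n, rfl⟩)

theorem exists_monotone_boundedContinuous_tendsto_of_lowerSemicontinuous
    (hf : LowerSemicontinuous f) (hm : ∀ x, m ≤ f x) :
    ∃ F : ℕ → BoundedContinuousFunction Ω ℝ, Monotone F ∧
      ∀ x, Tendsto (fun n => F n x) atTop (𝓝 (f x)) := by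
  obtain ⟨F, hF⟩ := exists_boundedContinuous_isLUB_of_lowerSemicontinuous hf hm
  refine ⟨partialSups F, (partialSups F).monotone, fun x => ?_⟩
  refine tendsto_atTop_isLUB (fun i j hij => (partialSups F).monotone hij x) ⟨?_, fun b hb => ?_⟩
  · rintro _ ⟨n, rfl⟩
    exact (partialSups_iff_forall (fun G : BoundedContinuousFunction Ω ℝ => G x ≤ f x)
      sup_le_iff).2 fun k _ => (hF x).1 ⟨k, rfl⟩
  · exact (hF x).2 (Set.forall_mem_range.2 fun n => (le_partialSups F n x).trans (hb ⟨n, rfl⟩))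

variable [MeasurableSpace Ω] [OpensMeasurableSpace Ω]

theorem lowerSemicontinuousOn_finiteMeasure_integral (hf : LowerSemicontinuous f)
    (hm : ∀ x, m ≤ f x) :
    LowerSemicontinuousOn (fun μ : FiniteMeasure Ω => ∫ x, f x ∂μ) {μ | Integrable f μ} := by
  obtain ⟨F, hFmono, hFlim⟩ :=
    exists_monotone_boundedContinuous_tendsto_of_lowerSemicontinuous hf hm
  have hF_le : ∀ n x, F n x ≤ f x := fun n x =>
    Monotone.ge_of_tendsto (fun i j hij => hFmono hij x) (hFlim x) n
  intro μ hμ y hy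
  have hint : Tendsto (fun n => ∫ x, F n x ∂μ) atTop (𝓝 (∫ x, f x ∂μ)) :=
    integral_tendsto_of_tendsto_of_monotone (fun n => (F n).integrable μ) hμ
      (.of_forall fun x i j hij => hFmono hij x) (.of_forall hFlim)
  obtain ⟨n, hn⟩ := (hint.eventually_const_lt hy).exists
  have hcont : Continuous fun ν : FiniteMeasure Ω => ∫ x, F n x ∂ν := by fun_prop
  filter_upwards [nhdsWithin_le_nhds (hcont.continuousAt.eventually_const_lt hn),
    self_mem_nhdsWithin] with ν hν hfν
  exact hν.trans_le (integral_mono ((F n).integrable ν) hfν (hF_le n))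

theorem upperSemicontinuousOn_finiteMeasure_integral (hf : UpperSemicontinuous f)
    (hm : ∀ x, f x ≤ m) :
    UpperSemicontinuousOn (fun μ : FiniteMeasure Ω => ∫ x, f x ∂μ) {μ | Integrable f μ} := by
  have hneg : LowerSemicontinuous fun x => -f x :=
    continuous_neg.comp_upperSemicontinuous_antitone hf fun _ _ => neg_le_neg
  simpa only [Function.comp_def, integral_neg, neg_neg, integrable_fun_neg_iff] using
    continuous_neg.comp_lowerSemicontinuousOn_antitone
      (lowerSemicontinuousOn_finiteMeasure_integral hneg fun x => neg_le_neg (hm x))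
      fun _ _ => neg_le_neg

theorem statement13_general {K : Set (FiniteMeasure Ω)} (hK : IsCountablyCompact K)
    {η : ℕ → Ω → ℝ} (hη : ∀ n, UpperSemicontinuous (η n)) {M : ℝ} (hM : ∀ ω, η 0 ω ≤ M)
    {ηstar : Ω → ℝ} (hmono : ∀ ω, Antitone fun n => η n ω)
    (hlim : ∀ ω, Tendsto (fun n => η n ω) atTop (𝓝 (ηstar ω)))
    (hint : ∀ Q ∈ K, Integrable ηstar (Q : Measure Ω)) :
    Tendsto (fun n => ⨆ Q ∈ K, ((∫ ω, η n ω ∂Q : ℝ) : EReal)) atTop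
      (𝓝 (⨆ Q ∈ K, ((∫ ω, ηstar ω ∂Q : ℝ) : EReal))) := by
  have hη_le : ∀ n ω, η n ω ≤ M := fun n ω => (hmono ω n.zero_le).trans (hM ω)
  have hη_int : ∀ n, ∀ Q ∈ K, Integrable (η n) (Q : Measure Ω) := fun n Q hQ =>
    integrable_of_le_of_le (hη n).measurable.aestronglyMeasurable
      (.of_forall fun ω => (hmono ω).le_of_tendsto (hlim ω) n) (.of_forall (hη_le n))
      (hint Q hQ) (integrable_const M)
  refine tendsto_iSup_of_antitone_of_isCountablyCompact hK (fun n => ?_)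
    (fun Q hQ i j hij => ?_) fun Q hQ => ?_
  · exact continuous_coe_real_ereal.comp_upperSemicontinuousOn
      ((upperSemicontinuousOn_finiteMeasure_integral (hη n) (hη_le n)).mono (hη_int n))
      EReal.coe_strictMono.monotone
  · exact EReal.coe_le_coe (integral_mono (hη_int j Q hQ) (hη_int i Q hQ) fun ω => hmono ω hij)
  · exact (continuous_coe_real_ereal.tendsto _).comp <| integral_tendsto_of_tendsto_of_antitone
      (fun n => hη_int n Q hQ) (hint Q hQ) (.of_forall hmono) (.of_forall hlim)

end PerfectlyNormal

section FiniteMeasure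

variable {Ω : Type*} [MeasurableSpace Ω] {𝒬 : Set (Measure Ω)}

theorem image_toMeasure_preimage_toMeasure (h𝒬 : ∀ Q ∈ 𝒬, IsFiniteMeasure Q) :
    FiniteMeasure.toMeasure '' (FiniteMeasure.toMeasure ⁻¹' 𝒬) = 𝒬 :=
  Set.image_preimage_eq_of_subset fun Q hQ => ⟨⟨Q, h𝒬 Q hQ⟩, rfl⟩

theorem isSeqCompact_preimage_toMeasure [TopologicalSpace Ω] [OpensMeasurableSpace Ω]
    (hfin : ∀ Q ∈ 𝒬, IsFiniteMeasure Q)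
    (h𝒬 : ∀ Q : ℕ → Measure Ω, (∀ n, Q n ∈ 𝒬) →
      ∃ Qstar ∈ 𝒬, ∃ φ : ℕ → ℕ, StrictMono φ ∧
        ∀ ξ : BoundedContinuousFunction Ω ℝ,
          Tendsto (fun n => ∫ ω, ξ ω ∂(Q (φ n))) atTop (𝓝 (∫ ω, ξ ω ∂Qstar))) :
    IsSeqCompact (FiniteMeasure.toMeasure ⁻¹' 𝒬) := by
  intro Q hQ
  obtain ⟨Qstar, hQstar, φ, hφ, hweak⟩ := h𝒬 (fun n => Q n) hQ
  exact ⟨⟨Qstar, hfin Qstar hQstar⟩, hQstar, φ, hφ,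
    FiniteMeasure.tendsto_iff_forall_integral_tendsto.2 hweak⟩

end FiniteMeasure

theorem statement13 {Ω : Type*} [TopologicalSpace Ω] [T2Space Ω] [PerfectlyNormalSpace Ω]
    [MeasurableSpace Ω] [BorelSpace Ω]
    (𝒬 : Set (Measure Ω)) (h𝒬ne : 𝒬.Nonempty)
    (h𝒬prob : ∀ Q ∈ 𝒬, IsProbabilityMeasure Q)
    (h𝒬seq : ∀ Q : ℕ → Measure Ω, (∀ n, Q n ∈ 𝒬) →
      ∃ Qstar ∈ 𝒬, ∃ φ : ℕ → ℕ, StrictMono φ ∧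
        ∀ ξ : BoundedContinuousFunction Ω ℝ,
          Tendsto (fun n => ∫ ω, ξ ω ∂(Q (φ n))) atTop (𝓝 (∫ ω, ξ ω ∂Qstar)))
    (η : ℕ → Ω → ℝ) (hη : ∀ n, UpperSemicontinuous (η n))
    (M : ℝ) (hb : ∀ n ω, |η n ω| ≤ M)
    (ηstar : Ω → ℝ) (hmono : ∀ ω, Antitone fun n => η n ω)
    (hlim : ∀ ω, Tendsto (fun n => η n ω) atTop (𝓝 (ηstar ω)))
    (hbstar : ∀ ω, |ηstar ω| ≤ M) :
    Tendsto (fun n => ⨆ Q ∈ 𝒬, ((∫ ω, η n ω ∂Q : ℝ) : EReal)) atTop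
      (𝓝 (⨆ Q ∈ 𝒬, ((∫ ω, ηstar ω ∂Q : ℝ) : EReal))) := by
  have hfin : ∀ Q ∈ 𝒬, IsFiniteMeasure Q := fun Q hQ =>
    have := h𝒬prob Q hQ
    inferInstance
  have hmeas : Measurable ηstar :=
    measurable_of_tendsto_metrizable (fun n => (hη n).measurable) (tendsto_pi_nhds.2 hlim)
  rw [← image_toMeasure_preimage_toMeasure hfin]
  simpa only [iSup_image] using statement13_general
    (isSeqCompact_preimage_toMeasure hfin h𝒬seq).isCountablyCompact hη
    (fun ω => (le_abs_self _).trans (hb 0 ω)) hmono hlim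
    fun Q _ => .of_bound hmeas.aestronglyMeasurable M (.of_forall hbstar)
end

section
/- Let Ω be a nonempty set and let Î be a collection of functions Ω → [−∞, +∞] with the following Fatou-closure property: whenever (ℓ_n) is a sequence in Î for which there exists a bounded function λ : Ω → ℝ with ℓ_n(ω) ≥ −λ(ω) for all n and all ω, then the pointwise liminf_n ℓ_n belongs to Î. Assume 0 ∈ Î. Let (ζ_n) be a sequence of bounded real-valued functions on Ω increasing pointwise to a bounded function ζ* : Ω → ℝ. Then lim_{n → ∞} Φ(ζ_n; Î) = Φ(ζ*; Î), where the limit is taken in [−∞, ∞]. -/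
open Filter Topology

/-- The super-replication functional
`Φ(ξ; I) := inf {c ∈ ℝ : ξ ≤ c + ℓ pointwise for some ℓ ∈ I}`, as an extended real
(with `inf ∅ = +∞`). -/
noncomputable def Phi {Ω : Type*} (I : Set (Ω → EReal)) (ξ : Ω → EReal) : EReal :=
  sInf {x : EReal | ∃ c : ℝ, x = (c : EReal) ∧ ∃ ℓ ∈ I, ∀ ω, ξ ω ≤ (c : EReal) + ℓ ω}

/-!
The heart of the matter is a Fatou inequality, `Φ(liminf ξₙ) ≤ liminf Φ(ξₙ)` for payoffs with a
common real lower bound. If `liminf Φ(ξₙ) < d`, then infinitely many `ξₙ` are superreplicated from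
the same capital `d` by some `ℓₙ ∈ I`. The lower bound on the payoffs passes to these `ℓₙ`, so
their pointwise `liminf` is again in `I`, and it superreplicates `liminf ξₙ` from `d`. When
`ξₙ` stays below its limit, monotonicity of `Φ` gives the reverse inequality.
-/

theorem liminf_le_coe_add_liminf {ι : Type*} {f : Filter ι} [f.NeBot] {u v : ι → EReal}
    {d : ℝ} (h : ∀ i, u i ≤ d + v i) : liminf u f ≤ d + liminf v f :=
  calc
    liminf u f ≤ liminf (fun i => d + v i) f := liminf_le_liminf (.of_forall h)
    _ ≤ limsup (fun _ => (d : EReal)) f + liminf v f :=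
      EReal.liminf_add_le (by simp) (by simp)
    _ = d + liminf v f := by rw [limsup_const]

/-- The Fatou-closure property: `I` contains the pointwise `liminf` of each of its sequences that
is bounded below by `-lam` for a bounded real function `lam`. It is what gives `Phi I`
a Fatou inequality. -/
def IsFatouClosed {Ω : Type*} (I : Set (Ω → EReal)) : Prop :=
  ∀ ℓ : ℕ → Ω → EReal, (∀ n, ℓ n ∈ I) →
    (∃ (lam : Ω → ℝ) (M : ℝ), (∀ ω, |lam ω| ≤ M) ∧ ∀ (n : ℕ) ω, -(lam ω : EReal) ≤ ℓ n ω) →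
    (fun ω => liminf (fun n => ℓ n ω) atTop) ∈ I

section SuperReplication

variable {Ω : Type*} {I : Set (Ω → EReal)}

theorem phi_mono : Monotone (Phi I) := fun _ _ hξη =>
  sInf_le_sInf fun _ ⟨c, hc, ℓ, hℓ, hηℓ⟩ => ⟨c, hc, ℓ, hℓ, fun ω => (hξη ω).trans (hηℓ ω)⟩

theorem phi_le_coe {ξ ℓ : Ω → EReal} {d : ℝ} (hℓ : ℓ ∈ I) (hξℓ : ∀ ω, ξ ω ≤ d + ℓ ω) :
    Phi I ξ ≤ d :=
  sInf_le ⟨d, rfl, ℓ, hℓ, hξℓ⟩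

theorem exists_le_coe_add_of_phi_lt {ξ : Ω → EReal} {d : ℝ} (hd : Phi I ξ < d) :
    ∃ ℓ ∈ I, ∀ ω, ξ ω ≤ d + ℓ ω := by
  obtain ⟨_, ⟨c, rfl, ℓ, hℓ, hξℓ⟩, hcd⟩ := sInf_lt_iff.1 hd
  exact ⟨ℓ, hℓ, fun ω => (hξℓ ω).trans (by gcongr)⟩

namespace IsFatouClosed

theorem liminf_mem_of_coe_le (hI : IsFatouClosed I) {ℓ : ℕ → Ω → EReal} (hℓ : ∀ n, ℓ n ∈ I)
    {a : ℝ} (ha : ∀ n ω, a ≤ ℓ n ω) : (fun ω => liminf (fun n => ℓ n ω) atTop) ∈ I :=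
  hI ℓ hℓ ⟨fun _ => -a, |a|, fun _ => (abs_neg a).le, by simpa using ha⟩

theorem phi_liminf_le (hI : IsFatouClosed I) {ξ : ℕ → Ω → EReal} {m : ℝ}
    (hm : ∀ n ω, m ≤ ξ n ω) :
    Phi I (fun ω => liminf (fun n => ξ n ω) atTop) ≤ liminf (fun n => Phi I (ξ n)) atTop := by
  refine EReal.le_of_forall_lt_iff_le.1 fun d hd => ?_
  have hfreq : ∃ᶠ n in atTop, Phi I (ξ n) < d :=
    frequently_lt_of_liminf_lt (by isBoundedDefault) hd
  obtain ⟨φ, hφ, hφd⟩ := extraction_of_frequently_atTop hfreq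
  choose ℓ hℓ hξℓ using fun k => exists_le_coe_add_of_phi_lt (hφd k)
  have hℓ_lower : ∀ k ω, ((m - d : ℝ) : EReal) ≤ ℓ k ω := fun k ω =>
    EReal.sub_le_of_le_add' ((hm (φ k) ω).trans (hξℓ k ω))
  refine phi_le_coe (hI.liminf_mem_of_coe_le hℓ hℓ_lower) fun ω => ?_
  calc
    liminf (fun n => ξ n ω) atTop ≤ liminf (fun k => ξ (φ k) ω) atTop :=
      hφ.tendsto_atTop.liminf_le_liminf_comp
    _ ≤ d + liminf (fun k => ℓ k ω) atTop := liminf_le_coe_add_liminf fun k => hξℓ k ω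

end IsFatouClosed

theorem statement14_general (hI : IsFatouClosed I) {ξ : ℕ → Ω → EReal} {ξstar : Ω → EReal}
    {m : ℝ} (hm : ∀ n ω, m ≤ ξ n ω) (hle : ∀ n, ξ n ≤ ξstar)
    (hlim : ∀ ω, Tendsto (fun n => ξ n ω) atTop (𝓝 (ξstar ω))) :
    Tendsto (fun n => Phi I (ξ n)) atTop (𝓝 (Phi I ξstar)) := by
  have hliminf : (fun ω => liminf (fun n => ξ n ω) atTop) = ξstar :=
    funext fun ω => (hlim ω).liminf_eq
  refine tendsto_of_le_liminf_of_limsup_le ?_ ?_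
  · simpa only [hliminf] using hI.phi_liminf_le hm
  · exact limsup_le_of_le (h := .of_forall fun n => phi_mono (hle n))

end SuperReplication

theorem statement14 {Ω : Type*} [Nonempty Ω] (Ihat : Set (Ω → EReal))
    (hzero : (fun _ => (0 : EReal)) ∈ Ihat)
    (hfatou : ∀ ℓ : ℕ → Ω → EReal, (∀ n, ℓ n ∈ Ihat) →
      (∃ (lam : Ω → ℝ) (M : ℝ), (∀ ω, |lam ω| ≤ M) ∧ ∀ (n : ℕ) ω, -(lam ω : EReal) ≤ ℓ n ω) →
      (fun ω => liminf (fun n => ℓ n ω) atTop) ∈ Ihat)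
    (ζ : ℕ → Ω → ℝ) (hbnd : ∀ n, ∃ M : ℝ, ∀ ω, |ζ n ω| ≤ M)
    (hmono : ∀ ω, Monotone fun n => ζ n ω)
    (ζstar : Ω → ℝ) (hζb : ∃ M : ℝ, ∀ ω, |ζstar ω| ≤ M)
    (hlim : ∀ ω, Tendsto (fun n => ζ n ω) atTop (𝓝 (ζstar ω))) :
    Tendsto (fun n => Phi Ihat fun ω => (ζ n ω : EReal)) atTop
      (𝓝 (Phi Ihat fun ω => (ζstar ω : EReal))) := by
  obtain ⟨M, hM⟩ := hbnd 0
  exact statement14_general hfatou (m := -M)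
    (fun n ω => mod_cast (neg_le_of_abs_le (hM ω)).trans (hmono ω n.zero_le))
    (fun n ω => EReal.coe_le_coe_iff.2 ((hmono ω).ge_of_tendsto (hlim ω) n))
    fun ω => EReal.tendsto_coe.2 (hlim ω)
end
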